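/- arXiv:1703.04035 — 3 statements merged into one kernel-verified Lean document; each statement's English description precedes it below -/
import Mathlib

section
/- If G is a Laman graph (|E| = 2|V| - 3 and every subset of k >= 2 vertices spans at most 2k - 3 edges), then G is generically bearing rigid in R^d for every d >= 2: there exists a configuration p of distinct points in R^d such that the bearing Laplacian of (G, p) has rank dn - d - 1. -/
open Matrix

open scoped Classical in
/-- The orthogonal projection matrix `P(x) = I - x xᵀ / ‖x‖²`. -/
noncomputable def proj {d : ℕ} (x : Fin d → ℝ) : Matrix (Fin d) (Fin d) ℝ :=
  1 - (x ⬝ᵥ x)⁻¹ • Matrix.vecMulVec x x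

open scoped Classical in
/-- The bearing Laplacian of the network `(G, p)`: the `dn × dn` block matrix with
`[L]_{ij} = -P(g_{ij})` for edges `(i,j)`, `0` for non-adjacent `i ≠ j`, and
`[L]_{ii} = ∑_{j ∈ N_i} P(g_{ij})`.  Since `proj` is scale-invariant,
`proj (p j - p i) = P(g_{ij})` for the unit bearing `g_{ij}`. -/
noncomputable def bearingLaplacian {V : Type*} [Fintype V] {d : ℕ}
    (G : SimpleGraph V) (p : V → Fin d → ℝ) :
    Matrix (V × Fin d) (V × Fin d) ℝ :=
  fun q r =>
    if q.1 = r.1 then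
      (∑ k ∈ Finset.univ.filter (fun k => G.Adj q.1 k), proj (p k - p q.1)) q.2 r.2
    else if G.Adj q.1 r.1 then -(proj (p r.1 - p q.1) q.2 r.2) else 0

open scoped Classical in
/-- A graph on `n` vertices is Laman if it has exactly `2n - 3` edges and every
subset of `k ≥ 2` vertices spans at most `2k - 3` edges. -/
def IsLaman {n : ℕ} (G : SimpleGraph (Fin n)) : Prop :=
  G.edgeFinset.card = 2 * n - 3 ∧
  ∀ S : Finset (Fin n), 2 ≤ S.card →
    (G.edgeFinset.filter (fun e => ∀ v ∈ e, v ∈ S)).card ≤ 2 * S.card - 3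

/-!
The kernel of the bearing Laplacian of `(G, p)` consists of the parallel drawings of `(G, p)`, so
the rank formula says that translations and dilations are the only ones.

In the plane, prescribe a normal for each edge and consider the placements in which every edge is
orthogonal to its normal. Choosing the normals generically, one edge at a time, each new normal
costs a dimension as long as a Hall-type inequality between numbers of edges and dimensions holds,
and this inequality is the sparsity count summed over connected components. Since it survives
imposing that two given vertices have the same height, for the resulting normals only the
constant placements put two vertices at equal height. As there are only `2n - 3` edges, some
non-constant placement `p` has these normals; its heights are pairwise distinct, and subtracting
from another such placement the multiple of `p` that equates two heights leaves a constant one.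

In higher dimension, keep the height and repeat the other coordinate of the planar placement. In a
parallel drawing of the result, the height together with any other coordinate is a parallel drawing
of the planar placement, and the shared height makes the dilation factors of all of them equal.
-/

open Module Finset

section HyperplaneSections

variable {K Q M ι κ : Type*} [Field K] [AddCommGroup Q] [Module K Q] [AddCommGroup M] [Module K M]

theorem exists_dual_forall_not_le_ker_comp [Infinite K] [Finite κ] (X : κ → Submodule K Q)
    (D : Q →ₗ[K] M) :
    ∃ ψ : Dual K M, ∀ k, ¬X k ≤ LinearMap.ker D → ¬X k ≤ LinearMap.ker (ψ ∘ₗ D) := by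
  choose x hxX hxD using fun k : {k // ¬X k ≤ LinearMap.ker D} ↦ SetLike.not_le_iff_exists.mp k.2
  obtain ⟨ψ, hψ⟩ := Module.exists_dual_forall_apply_ne_zero (K := K) (fun k ↦ D (x k)) hxD
  exact ⟨ψ, fun k hk hle ↦ hψ ⟨k, hk⟩ (hle (hxX ⟨k, hk⟩))⟩

variable [FiniteDimensional K Q]

theorem finrank_inf_ker_add_one {N : Submodule K Q} {f : Dual K Q}
    (hf : ¬N ≤ LinearMap.ker f) :
    finrank K ↥(N ⊓ LinearMap.ker f) + 1 = finrank K N := by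
  have hf' : f.domRestrict N ≠ 0 := fun h ↦ hf fun x hx ↦ LinearMap.congr_fun h ⟨x, hx⟩
  rw [← Dual.finrank_ker_add_one_of_ne_zero hf', LinearMap.domRestrict, LinearMap.ker_comp,
    ← Submodule.map_comap_subtype, Submodule.finrank_map_subtype_eq]

theorem finrank_le_finrank_inf_ker_add_one (N : Submodule K Q) (f : Dual K Q) :
    finrank K N ≤ finrank K ↥(N ⊓ LinearMap.ker f) + 1 := by
  by_cases hf : N ≤ LinearMap.ker f
  · rw [inf_of_le_left hf]
    exact Nat.le_succ _
  · exact (finrank_inf_ker_add_one hf).ge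

theorem finrank_le_card_add_finrank_inf_ker (S : Finset ι) (f : ι → Dual K Q) :
    finrank K Q ≤ #S + finrank K ↥(S.inf fun e ↦ LinearMap.ker (f e)) := by
  classical
  induction S using Finset.induction_on with
  | empty => rw [inf_empty, finrank_top, card_empty, zero_add]
  | insert e S he ih =>
    have h := finrank_le_finrank_inf_ker_add_one (S.inf fun e ↦ LinearMap.ker (f e)) (f e)
    rw [card_insert_of_notMem he, inf_insert, inf_comm]
    omega

variable [Infinite K] [Finite κ]

theorem exists_dual_forall_card_add_finrank_inf_ker_lt [DecidableEq ι] (D : ι → Q →ₗ[K] M)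
    {e : ι} {S : Finset ι} (he : e ∉ S) (N : κ → Submodule K Q)
    (h : ∀ k, ∀ F ⊆ insert e S,
      #F + finrank K ↥(N k ⊓ F.inf fun e ↦ LinearMap.ker (D e)) ≤ finrank K (N k)) :
    ∃ ψ : Dual K M, ∀ k, ∀ F ⊆ S,
      #F + finrank K ↥(N k ⊓ LinearMap.ker (ψ ∘ₗ D e) ⊓ F.inf fun e ↦ LinearMap.ker (D e)) <
        finrank K (N k) := by
  obtain ⟨ψ, hψ⟩ := exists_dual_forall_not_le_ker_comp
    (fun t : κ × S.powerset ↦ N t.1 ⊓ t.2.1.inf fun e ↦ LinearMap.ker (D e)) (D e)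
  refine ⟨ψ, fun k F hF ↦ ?_⟩
  rw [inf_right_comm]
  by_cases hle : N k ⊓ F.inf (fun e ↦ LinearMap.ker (D e)) ≤ LinearMap.ker (D e)
  · have hcard := h k (insert e F) (insert_subset_insert e hF)
    rw [card_insert_of_notMem fun heF ↦ he (hF heF), inf_insert, inf_left_comm,
      inf_of_le_right hle] at hcard
    have := Submodule.finrank_mono (R := K) <|
      inf_le_left (a := N k ⊓ F.inf fun e ↦ LinearMap.ker (D e)) (b := LinearMap.ker (ψ ∘ₗ D e))
    omega
  · have hcard := h k F (hF.trans (subset_insert e S))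
    have hcut : finrank K ↥(N k ⊓ (F.inf fun e ↦ LinearMap.ker (D e)) ⊓
        LinearMap.ker (ψ ∘ₗ D e)) + 1 = finrank K ↥(N k ⊓ F.inf fun e ↦ LinearMap.ker (D e)) :=
      finrank_inf_ker_add_one (hψ (k, ⟨F, mem_powerset.mpr hF⟩) hle)
    omega

/- The hypothesis is a Rado-type condition: cutting by `ψ ∘ₗ D e` for a generic `ψ` preserves it for
the remaining indices, simultaneously for all `N k`. -/
theorem exists_dual_forall_card_add_finrank_inf_ker_le (D : ι → Q →ₗ[K] M) (S : Finset ι)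
    (N : κ → Submodule K Q)
    (h : ∀ k, ∀ F ⊆ S,
      #F + finrank K ↥(N k ⊓ F.inf fun e ↦ LinearMap.ker (D e)) ≤ finrank K (N k)) :
    ∃ φ : ι → Dual K M, ∀ k,
      #S + finrank K ↥(N k ⊓ S.inf fun e ↦ LinearMap.ker (φ e ∘ₗ D e)) ≤ finrank K (N k) := by
  classical
  induction S using Finset.induction_on generalizing N with
  | empty =>
    refine ⟨0, fun k ↦ ?_⟩
    rw [inf_empty]
    exact h k ∅ subset_rfl
  | insert e S he ih =>
    obtain ⟨ψ, hψ⟩ := exists_dual_forall_card_add_finrank_inf_ker_lt D he N h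
    obtain ⟨φ, hφ⟩ := ih (fun k ↦ N k ⊓ LinearMap.ker (ψ ∘ₗ D e)) fun k F hF ↦
      Nat.le_of_lt_succ <| (hψ k F hF).trans_le (finrank_le_finrank_inf_ker_add_one _ _)
    refine ⟨Function.update φ e ψ, fun k ↦ ?_⟩
    have hS : (S.inf fun e' ↦ LinearMap.ker (Function.update φ e ψ e' ∘ₗ D e')) =
        S.inf fun e' ↦ LinearMap.ker (φ e' ∘ₗ D e') :=
      inf_congr rfl fun e' he' ↦ by rw [Function.update_of_ne (ne_of_mem_of_not_mem he' he)]
    have hN := hψ k ∅ (empty_subset S)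
    rw [inf_empty, inf_top_eq, card_empty, zero_add] at hN
    have hφk := hφ k
    rw [card_insert_of_notMem he, inf_insert, Function.update_self, hS, ← inf_assoc]
    omega

end HyperplaneSections

section Sparsity

variable {V : Type*}

/-- A graph is `(m, l)`-sparse in the sense of Lee and Streinu if any `k ≥ 2` of its vertices span
at most `m * k - l` edges; the inequality is stated without subtraction. -/
def IsSparse (G : SimpleGraph V) (m l : ℕ) : Prop :=
  ∀ S : Finset V, 2 ≤ #S → (G.edgeSet ∩ S.sym2).ncard + l ≤ m * #S

theorem IsSparse.mono {G H : SimpleGraph V} {m l : ℕ} (hG : IsSparse G m l) (hHG : H ≤ G) :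
    IsSparse H m l := fun S hS ↦ by
  have hsub : H.edgeSet ∩ S.sym2 ⊆ G.edgeSet ∩ S.sym2 :=
    Set.inter_subset_inter_left _ (SimpleGraph.edgeSet_mono hHG)
  grw [Set.ncard_le_ncard hsub (S.sym2.finite_toSet.inter_of_right _)]
  exact hG S hS

theorem exists_le_edgeFinset_eq {G : SimpleGraph V} [Fintype G.edgeSet] {F : Finset (Sym2 V)}
    (hF : F ⊆ G.edgeFinset) : ∃ H ≤ G, ∃ _ : Fintype H.edgeSet, H.edgeFinset = F := by
  have hFG : (F : Set (Sym2 V)) ⊆ G.edgeSet := fun e he ↦ SimpleGraph.mem_edgeFinset.mp (hF he)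
  have hE : (SimpleGraph.fromEdgeSet (F : Set (Sym2 V))).edgeSet = F := by
    rw [SimpleGraph.edgeSet_fromEdgeSet, sdiff_eq_left]
    exact Set.disjoint_left.mpr fun e he ↦ G.not_isDiag_of_mem_edgeSet (hFG he)
  refine ⟨SimpleGraph.fromEdgeSet F, ?_, (hE ▸ F.finite_toSet).fintype, ?_⟩
  · rwa [← SimpleGraph.edgeSet_subset_edgeSet, hE]
  · rw [← coe_inj, SimpleGraph.coe_edgeFinset, hE]

theorem edgeSet_inter_sym2_eq_empty_of_card_le_one (G : SimpleGraph V) {S : Finset V}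
    (hS : #S ≤ 1) : G.edgeSet ∩ (S.sym2 : Set (Sym2 V)) = ∅ := by
  rw [Set.eq_empty_iff_forall_notMem]
  rintro ⟨u, v⟩ ⟨huv, hmem⟩
  obtain ⟨hu, hv⟩ := mk_mem_sym2_iff.mp hmem
  exact G.ne_of_adj huv (card_le_one.mp hS u hu v hv)

theorem IsSparse.ncard_add_le {G : SimpleGraph V} {m l : ℕ} (hG : IsSparse G m l) (hml : m ≤ l)
    {S : Finset V} (hS : S.Nonempty) : (G.edgeSet ∩ S.sym2).ncard + m ≤ m * #S := by
  obtain hS1 | hS2 := Nat.lt_or_ge #S 2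
  · rw [edgeSet_inter_sym2_eq_empty_of_card_le_one G (Nat.le_of_lt_succ hS1), Set.ncard_empty,
      zero_add]
    exact Nat.le_mul_of_pos_right m hS.card_pos
  · exact (Nat.add_le_add_left hml _).trans (hG S hS2)

variable [Fintype V]

open scoped Classical in
theorem ncard_edgeSet_add_sum_le {H : SimpleGraph V} {m : ℕ} (b : H.ConnectedComponent → ℕ)
    (hb : ∀ C, (H.edgeSet ∩ C.supp.toFinset.sym2).ncard + b C ≤ m * #C.supp.toFinset) :
    H.edgeSet.ncard + ∑ C, b C ≤ m * Fintype.card V := by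
  have hedges : H.edgeSet ⊆ ⋃ C : H.ConnectedComponent, H.edgeSet ∩ C.supp.toFinset.sym2 := by
    rintro ⟨u, v⟩ huv
    have huv' : H.connectedComponentMk v = H.connectedComponentMk u :=
      SimpleGraph.ConnectedComponent.sound (SimpleGraph.Adj.reachable huv).symm
    exact Set.mem_iUnion.mpr ⟨H.connectedComponentMk u, huv, by simp [huv']⟩
  have hvertices : Fintype.card V = ∑ C : H.ConnectedComponent, #C.supp.toFinset := by
    simp_rw [← card_univ, card_eq_sum_card_fiberwise (f := H.connectedComponentMk)
      (s := univ) (t := univ) (fun _ _ ↦ mem_coe.mpr (mem_univ _))]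
    exact sum_congr rfl fun C _ ↦ congrArg card (by ext; simp)
  calc H.edgeSet.ncard + ∑ C, b C
    _ ≤ ∑ C : H.ConnectedComponent, (H.edgeSet ∩ C.supp.toFinset.sym2).ncard + ∑ C, b C := by
      grw [Set.ncard_le_ncard hedges (Set.toFinite _), Set.ncard_iUnion_le_of_fintype]
    _ ≤ m * Fintype.card V := by
      rw [← sum_add_distrib, hvertices, mul_sum]
      exact sum_le_sum fun C _ ↦ hb C

theorem IsSparse.ncard_edgeSet_add_mul_card_le {H : SimpleGraph V} {m l : ℕ}
    (hH : IsSparse H m l) (hml : m ≤ l) :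
    H.edgeSet.ncard + m * Nat.card H.ConnectedComponent ≤ m * Fintype.card V := by
  classical
  have := ncard_edgeSet_add_sum_le (fun _ ↦ m) fun C : H.ConnectedComponent ↦
    hH.ncard_add_le hml (Set.toFinset_nonempty.mpr C.nonempty_supp)
  simpa [mul_comm] using this

theorem IsSparse.ncard_edgeSet_add_mul_card_lt {H : SimpleGraph V} {m l : ℕ}
    (hH : IsSparse H m l) (hml : m < l) {i j : V} (hij : i ≠ j) (hr : H.Reachable i j) :
    H.edgeSet.ncard + m * Nat.card H.ConnectedComponent < m * Fintype.card V := by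
  classical
  have hcomp := SimpleGraph.ConnectedComponent.sound hr
  have := ncard_edgeSet_add_sum_le
    (fun C ↦ m + if C = H.connectedComponentMk i then 1 else 0) fun C ↦ by
    split_ifs with hC
    · have hcard : 2 ≤ #C.supp.toFinset :=
        one_lt_card.mpr ⟨i, by simp [hC], j, by simp [hC, hcomp], hij⟩
      exact (Nat.add_le_add_left (Nat.succ_le_of_lt hml) _).trans (hH _ hcard)
    · exact hH.ncard_add_le hml.le (Set.toFinset_nonempty.mpr C.nonempty_supp)
  rw [sum_add_distrib, sum_ite_eq' univ (H.connectedComponentMk i) fun _ ↦ 1, if_pos (mem_univ _),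
    sum_const, card_univ, smul_eq_mul, ← Nat.card_eq_fintype_card, mul_comm _ m] at this
  omega

end Sparsity

section EdgeDifferences

variable {V K M : Type*} [Field K] [AddCommGroup M] [Module K M]

/-- The difference of the positions of the two endpoints of `e`, as a linear map on the space of
all placements `V → M`. The endpoints are ordered by an arbitrary choice, so only statements that
are insensitive to the sign, for instance about kernels, are meaningful. -/
noncomputable def edgeDiff (K M : Type*) {V : Type*} [Field K] [AddCommGroup M] [Module K M]
    (e : Sym2 V) : (V → M) →ₗ[K] M :=
  (LinearMap.proj e.out.1 : (V → M) →ₗ[K] M) - LinearMap.proj e.out.2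

theorem apply_edgeDiff_eq_zero_iff {M' : Type*} [AddCommGroup M'] [Module K M']
    (φ : M →ₗ[K] M') {u v : V} {q : V → M} :
    φ (edgeDiff K M s(u, v) q) = 0 ↔ φ (q u) = φ (q v) := by
  have hout : s(s(u, v).out.1, s(u, v).out.2) = s(u, v) := Quot.out_eq s(u, v)
  simp only [edgeDiff, LinearMap.sub_apply, LinearMap.proj_apply, map_sub, sub_eq_zero]
  obtain ⟨h₁, h₂⟩ | ⟨h₁, h₂⟩ := Sym2.eq_iff.mp hout
  · rw [h₁, h₂]
  · rw [h₁, h₂, eq_comm]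

theorem edgeDiff_eq_zero_iff {u v : V} {q : V → M} :
    edgeDiff K M s(u, v) q = 0 ↔ q u = q v :=
  apply_edgeDiff_eq_zero_iff LinearMap.id

theorem inf_ker_edgeDiff_eq_range_funLeft (H : SimpleGraph V) [Fintype H.edgeSet] :
    (H.edgeFinset.inf fun e ↦ LinearMap.ker (edgeDiff K M e)) =
      LinearMap.range (LinearMap.funLeft K M H.connectedComponentMk) := by
  ext q
  simp only [Submodule.mem_finsetInf, LinearMap.mem_ker, LinearMap.mem_range,
    SimpleGraph.mem_edgeFinset]
  constructor
  · intro hq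
    have hreach {u v : V} (huv : H.Reachable u v) : q u = q v := by
      obtain ⟨p⟩ := huv
      induction p with
      | nil => rfl
      | cons hadj _ ih => exact (edgeDiff_eq_zero_iff.mp (hq _ hadj)).trans ih
    exact ⟨fun C ↦ q C.out,
      funext fun v ↦ hreach (SimpleGraph.ConnectedComponent.exact (Quot.out_eq _))⟩
  · rintro ⟨f, rfl⟩ ⟨u, v⟩ huv
    exact edgeDiff_eq_zero_iff.mpr <| congrArg f <|
      SimpleGraph.ConnectedComponent.sound (SimpleGraph.Adj.reachable huv)

theorem finrank_inf_ker_edgeDiff [Finite V] [FiniteDimensional K M] (H : SimpleGraph V)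
    [Fintype H.edgeSet] :
    finrank K ↥(H.edgeFinset.inf fun e ↦ LinearMap.ker (edgeDiff K M e)) =
      finrank K M * Nat.card H.ConnectedComponent := by
  have := Fintype.ofFinite H.ConnectedComponent
  have hinj := LinearMap.funLeft_injective_of_surjective K M H.connectedComponentMk
    Quot.mk_surjective
  rw [inf_ker_edgeDiff_eq_range_funLeft, LinearMap.finrank_range_of_inj hinj]
  simp [finrank_pi_fintype, mul_comm]

/-- The height of the point `i` above the point `j`, measured by the functional `ε`, as a
functional on the space of placements. A placement outside its kernel separates `i` from `j`. -/
def heightDiff (ε : Dual K M) (i j : V) : Dual K (V → M) :=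
  ε ∘ₗ ((LinearMap.proj i : (V → M) →ₗ[K] M) - LinearMap.proj j)

theorem heightDiff_apply (ε : Dual K M) (i j : V) (q : V → M) :
    heightDiff ε i j q = ε (q i) - ε (q j) := by
  simp [heightDiff]

theorem not_inf_ker_edgeDiff_le_ker_heightDiff {H : SimpleGraph V} [Fintype H.edgeSet]
    {ε : Dual K M} (hε : ε ≠ 0) {i j : V} (hij : ¬H.Reachable i j) :
    ¬(H.edgeFinset.inf fun e ↦ LinearMap.ker (edgeDiff K M e)) ≤
      LinearMap.ker (heightDiff ε i j) := by
  classical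
  obtain ⟨w, hw⟩ := DFunLike.ne_iff.mp hε
  rw [inf_ker_edgeDiff_eq_range_funLeft, SetLike.not_le_iff_exists]
  refine ⟨_, LinearMap.mem_range_self _ (Pi.single (H.connectedComponentMk i) w), ?_⟩
  have hcomp : H.connectedComponentMk j ≠ H.connectedComponentMk i := fun h ↦
    hij (SimpleGraph.ConnectedComponent.exact h.symm)
  simpa [heightDiff_apply, LinearMap.funLeft_apply, hcomp] using hw

theorem finrank_ker_heightDiff_add_one [Fintype V] [FiniteDimensional K M] {ε : Dual K M}
    (hε : ε ≠ 0) {i j : V} (hij : i ≠ j) :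
    finrank K ↥(LinearMap.ker (heightDiff ε i j)) + 1 = finrank K M * Fintype.card V := by
  classical
  have hne : heightDiff ε i j ≠ 0 := fun h ↦ hε <| LinearMap.ext fun w ↦ by
    simpa [heightDiff_apply, hij.symm] using LinearMap.congr_fun h (Pi.single i w)
  rw [Dual.finrank_ker_add_one_of_ne_zero hne]
  simp [finrank_pi_fintype, mul_comm]

theorem IsSparse.card_edgeFinset_add_finrank_le [Finite V] [FiniteDimensional K M]
    {H : SimpleGraph V} [Fintype H.edgeSet] {l : ℕ} (hH : IsSparse H (finrank K M) l)
    (hl : finrank K M < l) {ε : Dual K M} (hε : ε ≠ 0) {i j : V} (hij : i ≠ j) :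
    #H.edgeFinset + finrank K ↥(LinearMap.ker (heightDiff ε i j) ⊓
        H.edgeFinset.inf fun e ↦ LinearMap.ker (edgeDiff K M e)) ≤
      finrank K ↥(LinearMap.ker (heightDiff ε i j)) := by
  cases nonempty_fintype V
  have hE : H.edgeSet.ncard = #H.edgeFinset := by
    rw [← SimpleGraph.coe_edgeFinset, Set.ncard_coe_finset]
  by_cases hr : H.Reachable i j
  · have hcount := hH.ncard_edgeSet_add_mul_card_lt hl hij hr
    rw [hE, ← finrank_inf_ker_edgeDiff, ← finrank_ker_heightDiff_add_one hε hij] at hcount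
    exact Nat.le_of_lt_succ <|
      (Nat.add_le_add_left (Submodule.finrank_mono inf_le_right) _).trans_lt hcount
  · have hcount := hH.ncard_edgeSet_add_mul_card_le hl.le
    rw [hE, ← finrank_inf_ker_edgeDiff, ← finrank_ker_heightDiff_add_one hε hij,
      ← finrank_inf_ker_add_one (not_inf_ker_edgeDiff_le_ker_heightDiff hε hr),
      ← add_assoc, inf_comm] at hcount
    exact Nat.le_of_succ_le_succ hcount

end EdgeDifferences

section ParallelDrawings

variable {V K E : Type*} [Field K] [AddCommGroup E] [Module K E]

/-- The parallel drawings of the framework `(G, p)`: the placements of the vertices for which every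
edge keeps the direction it has in `p`, possibly reversed or shrunk to a point. -/
def parallelDrawings (K : Type*) {V E : Type*} [Field K] [AddCommGroup E] [Module K E]
    (G : SimpleGraph V) (p : V → E) : Submodule K (V → E) where
  carrier := {q | ∀ u v, G.Adj u v → q u - q v ∈ K ∙ (p u - p v)}
  zero_mem' _ _ _ := by simp
  add_mem' hq hr u v huv := by
    simpa [add_sub_add_comm] using add_mem (hq u v huv) (hr u v huv)
  smul_mem' c q hq u v huv := by
    simpa [smul_sub] using Submodule.smul_mem _ c (hq u v huv)

/-- The constant placements; adding one of them to a placement translates it. -/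
def translations (K V E : Type*) [Field K] [AddCommGroup E] [Module K E] : Submodule K (V → E) :=
  LinearMap.range (LinearMap.pi fun _ ↦ LinearMap.id)

/-- The parallel drawings that every framework has: the images of `p` under translations and
dilations. -/
def trivialDrawings (K : Type*) {V E : Type*} [Field K] [AddCommGroup E] [Module K E]
    (p : V → E) : Submodule K (V → E) :=
  translations K V E ⊔ K ∙ p

theorem mem_translations [Nonempty V] {q : V → E} :
    q ∈ translations K V E ↔ ∀ u v, q u = q v := by
  constructor
  · rintro ⟨a, rfl⟩ _ _
    rfl
  · exact fun hq ↦ ⟨q (Classical.arbitrary V), funext fun v ↦ hq _ v⟩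

theorem mem_trivialDrawings [Nonempty V] {p q : V → E} :
    q ∈ trivialDrawings K p ↔ ∃ c : K, ∀ u v, q u - q v = c • (p u - p v) := by
  simp only [trivialDrawings, Submodule.mem_sup, Submodule.mem_span_singleton]
  constructor
  · rintro ⟨t, ht, _, ⟨c, rfl⟩, rfl⟩
    refine ⟨c, fun u v ↦ ?_⟩
    simp [mem_translations.mp ht u v, smul_sub]
  · rintro ⟨c, hc⟩
    refine ⟨q - c • p, mem_translations.mpr fun u v ↦ ?_, c • p, ⟨c, rfl⟩, sub_add_cancel _ _⟩
    rw [← sub_eq_zero, ← sub_eq_zero.mpr (hc u v)]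
    simp only [Pi.sub_apply, Pi.smul_apply, smul_sub]
    abel

theorem trivialDrawings_le_parallelDrawings [Nonempty V] (G : SimpleGraph V) (p : V → E) :
    trivialDrawings K p ≤ parallelDrawings K G p := fun q hq u v _ ↦ by
  obtain ⟨c, hc⟩ := mem_trivialDrawings.mp hq
  rw [hc]
  exact Submodule.smul_mem _ c (Submodule.mem_span_singleton_self _)

theorem finrank_translations [Nonempty V] : finrank K (translations K V E) = finrank K E :=
  LinearMap.finrank_range_of_inj fun _ _ h ↦ congrFun h (Classical.arbitrary V)

theorem finrank_trivialDrawings [Finite V] [Nontrivial V] [FiniteDimensional K E] {p : V → E}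
    (hp : Function.Injective p) : finrank K (trivialDrawings K p) = finrank K E + 1 := by
  obtain ⟨u, v, huv⟩ := exists_pair_ne V
  have hpt : p ∉ translations K V E := fun h ↦ huv (hp (mem_translations.mp h u v))
  rw [trivialDrawings, Submodule.finrank_sup_span_singleton hpt, finrank_translations]

/-- The placements for which the two endpoints of every edge `e` lie on a common level set of the
functional `φ e`. In the plane this prescribes the directions of the edges by their normals. -/
noncomputable def drawingsWithNormals (G : SimpleGraph V) [Fintype G.edgeSet]
    (φ : Sym2 V → Dual K E) : Submodule K (V → E) :=
  G.edgeFinset.inf fun e ↦ LinearMap.ker (φ e ∘ₗ edgeDiff K E e)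

theorem mem_drawingsWithNormals {G : SimpleGraph V} [Fintype G.edgeSet] {φ : Sym2 V → Dual K E}
    {q : V → E} : q ∈ drawingsWithNormals G φ ↔
      ∀ u v, G.Adj u v → φ s(u, v) (q u) = φ s(u, v) (q v) := by
  simp only [drawingsWithNormals, Submodule.mem_finsetInf, SimpleGraph.mem_edgeFinset, Sym2.forall,
    SimpleGraph.mem_edgeSet, LinearMap.mem_ker, LinearMap.comp_apply, apply_edgeDiff_eq_zero_iff]

theorem translations_le_drawingsWithNormals [Nonempty V] (G : SimpleGraph V) [Fintype G.edgeSet]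
    (φ : Sym2 V → Dual K E) : translations K V E ≤ drawingsWithNormals G φ :=
  fun q hq ↦ mem_drawingsWithNormals.mpr fun u v _ ↦ by rw [mem_translations.mp hq u v]

theorem parallelDrawings_le_drawingsWithNormals {G : SimpleGraph V} [Fintype G.edgeSet]
    {φ : Sym2 V → Dual K E} {p : V → E} (hp : p ∈ drawingsWithNormals G φ) :
    parallelDrawings K G p ≤ drawingsWithNormals G φ :=
  fun q hq ↦ mem_drawingsWithNormals.mpr fun u v huv ↦ by
    obtain ⟨c, hc⟩ := Submodule.mem_span_singleton.mp (hq u v huv)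
    have hφ := mem_drawingsWithNormals.mp hp u v huv
    rw [← sub_eq_zero, ← map_sub, ← hc, map_smul, map_sub, hφ, sub_self, smul_zero]

section Generic

variable [FiniteDimensional K E] [Fintype V] {G : SimpleGraph V} [Fintype G.edgeSet]

theorem IsSparse.exists_normals [Infinite K] [Nonempty V]
    (hG : IsSparse G (finrank K E) (finrank K E + 1))
    (hcard : #G.edgeFinset + (finrank K E + 1) = finrank K E * Fintype.card V)
    {ε : Dual K E} (hε : ε ≠ 0) :
    ∃ φ : Sym2 V → Dual K E, ∀ i j, i ≠ j →
      LinearMap.ker (heightDiff ε i j) ⊓ drawingsWithNormals G φ ≤ translations K V E := by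
  obtain ⟨φ, hφ⟩ := exists_dual_forall_card_add_finrank_inf_ker_le (edgeDiff K E) G.edgeFinset
    (fun t : {t : V × V // t.1 ≠ t.2} ↦ LinearMap.ker (heightDiff ε t.1.1 t.1.2)) fun t F hF ↦ by
      obtain ⟨H, hHG, _, rfl⟩ := exists_le_edgeFinset_eq hF
      exact (hG.mono hHG).card_edgeFinset_add_finrank_le (Nat.lt_succ_self _) hε t.2
  refine ⟨φ, fun i j hij ↦ ?_⟩
  have htrans : translations K V E ≤
      LinearMap.ker (heightDiff ε i j) ⊓ drawingsWithNormals G φ :=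
    le_inf (fun q hq ↦ by simp [heightDiff_apply, mem_translations.mp hq i j])
      (translations_le_drawingsWithNormals G φ)
  refine (Submodule.eq_of_le_of_finrank_le htrans ?_).ge
  have hN := finrank_ker_heightDiff_add_one hε hij
  have hφij : #G.edgeFinset +
      finrank K ↥(LinearMap.ker (heightDiff ε i j) ⊓ drawingsWithNormals G φ) ≤
        finrank K ↥(LinearMap.ker (heightDiff ε i j)) := hφ ⟨(i, j), hij⟩
  rw [finrank_translations]
  omega

theorem exists_mem_drawingsWithNormals_notMem_translations [Nonempty V]
    (hcard : #G.edgeFinset + finrank K E < finrank K E * Fintype.card V)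
    (φ : Sym2 V → Dual K E) : ∃ p ∈ drawingsWithNormals G φ, p ∉ translations K V E := by
  have hle : finrank K (V → E) ≤ #G.edgeFinset + finrank K (drawingsWithNormals G φ) :=
    finrank_le_card_add_finrank_inf_ker _ _
  refine SetLike.not_le_iff_exists.mp fun h ↦ hcard.not_ge ?_
  grw [Submodule.finrank_mono h, finrank_translations] at hle
  simpa [finrank_pi_fintype, mul_comm] using hle

theorem IsSparse.exists_parallelDrawings_le_trivialDrawings [Infinite K] [Nontrivial V]
    (hG : IsSparse G (finrank K E) (finrank K E + 1))
    (hcard : #G.edgeFinset + (finrank K E + 1) = finrank K E * Fintype.card V)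
    {ε : Dual K E} (hε : ε ≠ 0) :
    ∃ p : V → E, Function.Injective (fun v ↦ ε (p v)) ∧
      parallelDrawings K G p ≤ trivialDrawings K p := by
  obtain ⟨φ, hφ⟩ := hG.exists_normals hcard hε
  obtain ⟨p, hpφ, hpt⟩ := exists_mem_drawingsWithNormals_notMem_translations (G := G) (by omega) φ
  have hp {i j : V} (hij : i ≠ j) : heightDiff ε i j p ≠ 0 := fun h ↦ hpt (hφ i j hij ⟨h, hpφ⟩)
  refine ⟨p, fun i j h ↦ by_contra fun hij ↦ hp hij ?_, fun q hq ↦ ?_⟩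
  · rw [heightDiff_apply, sub_eq_zero.mpr h]
  obtain ⟨i, j, hij⟩ := exists_pair_ne V
  have hmem : q - (heightDiff ε i j q / heightDiff ε i j p) • p ∈ translations K V E := by
    refine hφ i j hij ⟨?_, sub_mem (parallelDrawings_le_drawingsWithNormals hpφ hq)
      (Submodule.smul_mem _ _ hpφ)⟩
    simp [hp hij]
  exact Submodule.mem_sup.mpr ⟨_, hmem, _, Submodule.mem_span_singleton.mpr ⟨_, rfl⟩,
    sub_add_cancel _ _⟩

end Generic

theorem comp_mem_parallelDrawings {G : SimpleGraph V} {ι κ : Type*} {p : V → κ → K} {σ : ι → κ}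
    {s : κ → ι} (hs : Function.RightInverse s σ) {q : V → ι → K}
    (hq : q ∈ parallelDrawings K G fun v ↦ p v ∘ σ) :
    (fun v ↦ q v ∘ s) ∈ parallelDrawings K G p := fun u v huv ↦ by
  obtain ⟨c, hc⟩ := Submodule.mem_span_singleton.mp (hq u v huv)
  refine Submodule.mem_span_singleton.mpr ⟨c, funext fun k ↦ ?_⟩
  simpa [hs k] using congrFun hc (s k)

theorem exists_rightInverse_apply_eq {ι κ : Type*} {σ : ι → κ} (hσ : Function.Surjective σ)
    (k : ι) : ∃ s : κ → ι, Function.RightInverse s σ ∧ s (σ k) = k := by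
  classical
  refine ⟨Function.update (Function.surjInv hσ) (σ k) k, fun l ↦ ?_, Function.update_self ..⟩
  obtain rfl | hl := eq_or_ne l (σ k)
  · rw [Function.update_self]
  · rw [Function.update_of_ne hl, Function.surjInv_eq hσ]

/- Every section of `σ` turns a parallel drawing of the repeated framework into one of `p`; the
dilation factors of all these drawings agree because they can be read off the coordinate `i₀`. -/
theorem parallelDrawings_comp_le_trivialDrawings [Nontrivial V] {G : SimpleGraph V} {ι κ : Type*}
    {p : V → κ → K} (h : parallelDrawings K G p ≤ trivialDrawings K p) {σ : ι → κ}
    (hσ : Function.Surjective σ) {i₀ : ι} (hi₀ : ∀ k, σ k = σ i₀ → k = i₀)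
    (hp : Function.Injective fun v ↦ p v (σ i₀)) :
    parallelDrawings K G (fun v ↦ p v ∘ σ) ≤ trivialDrawings K fun v ↦ p v ∘ σ := fun q hq ↦ by
  have hcoord (k : ι) : ∃ c : K, ∀ u v, q u k - q v k = c * (p u (σ k) - p v (σ k)) ∧
      q u i₀ - q v i₀ = c * (p u (σ i₀) - p v (σ i₀)) := by
    obtain ⟨s, hs, hsk⟩ := exists_rightInverse_apply_eq hσ k
    have hsi₀ : s (σ i₀) = i₀ := hi₀ _ (hs _)
    obtain ⟨c, hc⟩ := mem_trivialDrawings.mp (h (comp_mem_parallelDrawings hs hq))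
    refine ⟨c, fun u v ↦ ⟨?_, ?_⟩⟩
    · simpa [hsk] using congrFun (hc u v) (σ k)
    · simpa [hsi₀] using congrFun (hc u v) (σ i₀)
  choose c hc using hcoord
  obtain ⟨i, j, hij⟩ := exists_pair_ne V
  have hc_eq (k : ι) : c k = c i₀ :=
    mul_right_cancel₀ (sub_ne_zero.mpr (hp.ne hij)) ((hc k i j).2.symm.trans (hc i₀ i j).2)
  exact mem_trivialDrawings.mpr ⟨c i₀, fun u v ↦ funext fun k ↦ (hc k u v).1.trans <| by
    rw [hc_eq]; rfl⟩

theorem IsSparse.exists_injective_parallelDrawings_eq_trivialDrawings [Infinite K] [Fintype V]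
    [Nontrivial V] {G : SimpleGraph V} [Fintype G.edgeSet] (hG : IsSparse G 2 3)
    (hcard : #G.edgeFinset + 3 = 2 * Fintype.card V) (ι : Type*) [Nontrivial ι] :
    ∃ p : V → ι → K, Function.Injective p ∧ parallelDrawings K G p = trivialDrawings K p := by
  classical
  have hfinrank : finrank K (Fin 2 → K) = 2 := finrank_fin_fun K
  have hε : (LinearMap.proj 0 : Dual K (Fin 2 → K)) ≠ 0 := fun h ↦
    one_ne_zero (α := K) (LinearMap.congr_fun h fun _ ↦ 1)
  obtain ⟨p, hp, hrigid⟩ := IsSparse.exists_parallelDrawings_le_trivialDrawings (K := K)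
    (E := Fin 2 → K) (by rwa [hfinrank]) (by rwa [hfinrank]) hε
  obtain ⟨i₀, i₁, hi⟩ := exists_pair_ne ι
  let σ (k : ι) : Fin 2 := if k = i₀ then 0 else 1
  have hσ : Function.Surjective σ := Fin.forall_fin_two.mpr
    ⟨⟨i₀, if_pos rfl⟩, ⟨i₁, if_neg hi.symm⟩⟩
  have hσ₀ : σ i₀ = 0 := if_pos rfl
  have hi₀ (k : ι) (hk : σ k = σ i₀) : k = i₀ := by
    by_contra hne
    simp [σ, hne] at hk
  have hp₀ : Function.Injective fun v ↦ p v (σ i₀) := by rwa [hσ₀]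
  exact ⟨fun v ↦ p v ∘ σ, fun u v h ↦ hp₀ (congrFun h i₀),
    (parallelDrawings_comp_le_trivialDrawings hrigid hσ hi₀ hp₀).antisymm
      (trivialDrawings_le_parallelDrawings G _)⟩

end ParallelDrawings

section BearingLaplacian

section Projection

variable {d : ℕ} {g z : Fin d → ℝ}

theorem proj_mulVec (g z : Fin d → ℝ) :
    proj g *ᵥ z = z - ((g ⬝ᵥ g)⁻¹ * (g ⬝ᵥ z)) • g := by
  simp only [proj, sub_mulVec, one_mulVec, smul_mulVec, vecMulVec_mulVec, op_smul_eq_smul,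
    smul_smul]

theorem proj_neg (g : Fin d → ℝ) : proj (-g) = proj g := by
  simp [proj, neg_vecMulVec, vecMulVec_neg]

theorem proj_mulVec_eq_zero_iff : proj g *ᵥ z = 0 ↔ z ∈ ℝ ∙ g := by
  rw [proj_mulVec, sub_eq_zero, Submodule.mem_span_singleton]
  refine ⟨fun h ↦ ⟨_, h.symm⟩, ?_⟩
  rintro ⟨c, rfl⟩
  obtain rfl | hg := eq_or_ne g 0
  · simp
  · rw [dotProduct_smul, smul_eq_mul, mul_left_comm,
      inv_mul_cancel₀ (mt dotProduct_self_eq_zero.mp hg), mul_one]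

theorem dotProduct_proj_mulVec_eq_zero (g z : Fin d → ℝ) : g ⬝ᵥ proj g *ᵥ z = 0 := by
  rw [proj_mulVec, dotProduct_sub, dotProduct_smul, smul_eq_mul]
  obtain rfl | hg := eq_or_ne g 0
  · simp
  · rw [mul_right_comm, inv_mul_cancel₀ (mt dotProduct_self_eq_zero.mp hg), one_mul, sub_self]

theorem dotProduct_proj_mulVec_self (g z : Fin d → ℝ) :
    z ⬝ᵥ proj g *ᵥ z = (proj g *ᵥ z) ⬝ᵥ (proj g *ᵥ z) := by
  nth_rw 2 [proj_mulVec]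
  rw [sub_dotProduct, smul_dotProduct, dotProduct_proj_mulVec_eq_zero, smul_zero, sub_zero]

end Projection

theorem two_mul_sum_dotProduct_sum {V ι R : Type*} [Fintype V] [Fintype ι] [CommRing R]
    (x : V → ι → R) {f : V → V → ι → R} (hf : ∀ u v, f v u = -f u v) :
    2 * ∑ u, x u ⬝ᵥ ∑ v, f u v = ∑ u, ∑ v, (x u - x v) ⬝ᵥ f u v := by
  have hswap : ∑ u, ∑ v, x v ⬝ᵥ f u v = -∑ u, ∑ v, x u ⬝ᵥ f u v := by
    simp only [← sum_neg_distrib, ← dotProduct_neg, ← hf]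
    exact sum_comm
  simp only [sub_dotProduct, sum_sub_distrib, hswap, dotProduct_sum]
  ring

variable {V : Type*} {d : ℕ} {G : SimpleGraph V} {p x : V → Fin d → ℝ}

open scoped Classical in
/-- The part of the displacement `x u - x v` that is orthogonal to the edge from `u` to `v` of the
framework `(G, p)`, and zero if `u` and `v` are not adjacent. -/
noncomputable def normalDisplacement (G : SimpleGraph V) (p x : V → Fin d → ℝ) (u v : V) :
    Fin d → ℝ :=
  if G.Adj u v then proj (p u - p v) *ᵥ (x u - x v) else 0

theorem normalDisplacement_swap (u v : V) :
    normalDisplacement G p x v u = -normalDisplacement G p x u v := by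
  by_cases h : G.Adj u v
  · simp only [normalDisplacement, if_pos h, if_pos h.symm]
    rw [← proj_neg, neg_sub, ← mulVec_neg, neg_sub]
  · simp only [normalDisplacement, if_neg h, if_neg (mt G.adj_symm h), neg_zero]

theorem sub_dotProduct_normalDisplacement (u v : V) :
    (x u - x v) ⬝ᵥ normalDisplacement G p x u v =
      normalDisplacement G p x u v ⬝ᵥ normalDisplacement G p x u v := by
  unfold normalDisplacement
  split_ifs with h
  · exact dotProduct_proj_mulVec_self _ _
  · rw [dotProduct_zero, dotProduct_zero]

theorem mem_parallelDrawings_iff_normalDisplacement_eq_zero :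
    x ∈ parallelDrawings ℝ G p ↔ ∀ u v, normalDisplacement G p x u v = 0 := by
  refine forall₂_congr fun u v ↦ ?_
  unfold normalDisplacement
  split_ifs with h
  · rw [proj_mulVec_eq_zero_iff, imp_iff_right h]
  · exact iff_of_true (fun h' ↦ absurd h' h) rfl

variable [Fintype V]

open scoped Classical in
theorem bearingLaplacian_block (u v : V) :
    Matrix.of (fun k l ↦ bearingLaplacian G p (u, k) (v, l)) =
      (if u = v then ∑ w with G.Adj u w, proj (p u - p w) else 0) -
        if G.Adj u v then proj (p u - p v) else 0 := by
  have hproj (w : V) : proj (p u - p w) = proj (p w - p u) := by rw [← proj_neg, neg_sub]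
  ext k l
  simp only [Matrix.of_apply, bearingLaplacian, hproj]
  split_ifs with huv hadj <;> simp_all

theorem curry_bearingLaplacian_mulVec (y : V × Fin d → ℝ) (u : V) :
    Function.curry (bearingLaplacian G p *ᵥ y) u =
      ∑ v, normalDisplacement G p (Function.curry y) u v := by
  classical
  have ite_mulVec (c : Prop) [Decidable c] (A : Matrix (Fin d) (Fin d) ℝ) (z : Fin d → ℝ) :
      (if c then A else 0) *ᵥ z = if c then A *ᵥ z else 0 := by
    split_ifs
    · rfl
    · exact zero_mulVec z
  calc Function.curry (bearingLaplacian G p *ᵥ y) u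
    _ = ∑ v, Matrix.of (fun k l ↦ bearingLaplacian G p (u, k) (v, l)) *ᵥ Function.curry y v := by
      ext k
      rw [Finset.sum_apply]
      exact Fintype.sum_prod_type _
    _ = ∑ v, ((if G.Adj u v then proj (p u - p v) *ᵥ Function.curry y u else 0) -
          if G.Adj u v then proj (p u - p v) *ᵥ Function.curry y v else 0) := by
      simp only [bearingLaplacian_block, sub_mulVec, sum_sub_distrib, ite_mulVec, sum_ite_eq,
        mem_univ, if_true, sum_filter, sum_mulVec]
    _ = ∑ v, normalDisplacement G p (Function.curry y) u v := by
      simp only [normalDisplacement, mulVec_sub, ite_sub_ite, sub_zero]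

theorem two_mul_dotProduct_bearingLaplacian_mulVec (y : V × Fin d → ℝ) :
    2 * (y ⬝ᵥ bearingLaplacian G p *ᵥ y) =
      ∑ u, ∑ v, normalDisplacement G p (Function.curry y) u v ⬝ᵥ
        normalDisplacement G p (Function.curry y) u v := by
  have hcurry : y ⬝ᵥ bearingLaplacian G p *ᵥ y =
      ∑ u, Function.curry y u ⬝ᵥ Function.curry (bearingLaplacian G p *ᵥ y) u :=
    Fintype.sum_prod_type _
  simp only [hcurry, curry_bearingLaplacian_mulVec,
    two_mul_sum_dotProduct_sum _ normalDisplacement_swap, sub_dotProduct_normalDisplacement]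

theorem bearingLaplacian_mulVec_eq_zero_iff {y : V × Fin d → ℝ} :
    bearingLaplacian G p *ᵥ y = 0 ↔ Function.curry y ∈ parallelDrawings ℝ G p := by
  rw [mem_parallelDrawings_iff_normalDisplacement_eq_zero]
  constructor
  · intro hy u v
    have hnonneg (z : Fin d → ℝ) : 0 ≤ z ⬝ᵥ z := sum_nonneg fun k _ ↦ mul_self_nonneg (z k)
    have hsum := two_mul_dotProduct_bearingLaplacian_mulVec (G := G) (p := p) y
    rw [hy, dotProduct_zero, mul_zero, eq_comm, ← sum_product',
      sum_eq_zero_iff_of_nonneg fun _ _ ↦ hnonneg _] at hsum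
    exact dotProduct_self_eq_zero.mp (hsum (u, v) (mem_univ _))
  · intro hy
    ext ⟨u, k⟩
    have hu := curry_bearingLaplacian_mulVec (G := G) (p := p) y u
    rw [sum_eq_zero fun v _ ↦ hy u v] at hu
    exact congrFun hu k

theorem rank_bearingLaplacian_add_finrank_parallelDrawings (G : SimpleGraph V)
    (p : V → Fin d → ℝ) :
    (bearingLaplacian G p).rank + finrank ℝ (parallelDrawings ℝ G p) = Fintype.card V * d := by
  have hker : LinearMap.ker (bearingLaplacian G p).mulVecLin =
      (parallelDrawings ℝ G p).comap (LinearEquiv.curry ℝ ℝ V (Fin d)).toLinearMap :=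
    Submodule.ext fun y ↦ bearingLaplacian_mulVec_eq_zero_iff
  have := (bearingLaplacian G p).mulVecLin.finrank_range_add_finrank_ker
  rw [hker, (LinearEquiv.ofSubmodule' _ _).finrank_eq] at this
  simpa [Matrix.rank] using this

end BearingLaplacian

theorem IsLaman.isSparse {n : ℕ} {G : SimpleGraph (Fin n)} (hG : IsLaman G) :
    IsSparse G 2 3 := fun S hS ↦ by
  classical
  have hspan : G.edgeSet ∩ S.sym2 = ({e ∈ G.edgeFinset | ∀ v ∈ e, v ∈ S} : Finset _) := by
    ext e
    simp only [Set.mem_inter_iff, mem_coe, mem_sym2_iff, mem_filter, SimpleGraph.mem_edgeFinset]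
  have hcard := hG.2 S hS
  rw [hspan, Set.ncard_coe_finset]
  omega

theorem rank_bearingLaplacian_of_subsingleton {V : Type*} [Fintype V] [Subsingleton V] {d : ℕ}
    (G : SimpleGraph V) (p : V → Fin d → ℝ) : (bearingLaplacian G p).rank = 0 := by
  have hrank := rank_bearingLaplacian_add_finrank_parallelDrawings G p
  have htop : parallelDrawings ℝ G p = ⊤ := eq_top_iff.mpr fun _ _ u v huv ↦
    absurd (Subsingleton.elim u v) (G.ne_of_adj huv)
  rw [htop, finrank_top] at hrank
  simpa [finrank_pi_fintype] using hrank

theorem stmt16_general {V : Type*} [Fintype V] (G : SimpleGraph V) [Fintype G.edgeSet]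
    (hcard : #G.edgeFinset = 2 * Fintype.card V - 3) (hG : IsSparse G 2 3) (d : ℕ) (hd : 2 ≤ d) :
    ∃ p : V → Fin d → ℝ, Function.Injective p ∧
      (bearingLaplacian G p).rank = d * Fintype.card V - d - 1 := by
  obtain hV | hV := subsingleton_or_nontrivial V
  · refine ⟨0, Function.injective_of_subsingleton _, ?_⟩
    have hV1 : d * Fintype.card V ≤ d * 1 :=
      Nat.mul_le_mul_left d (Fintype.card_le_one_iff_subsingleton.mpr hV)
    rw [rank_bearingLaplacian_of_subsingleton]
    omega
  · have : Nontrivial (Fin d) := Fin.nontrivial_iff_two_le.mpr hd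
    have hV2 : 1 < Fintype.card V := Fintype.one_lt_card
    obtain ⟨p, hp, hrigid⟩ :=
      hG.exists_injective_parallelDrawings_eq_trivialDrawings (K := ℝ) (by omega) (Fin d)
    have hrank := rank_bearingLaplacian_add_finrank_parallelDrawings G p
    rw [hrigid, finrank_trivialDrawings hp, finrank_fin_fun, mul_comm] at hrank
    exact ⟨p, hp, by omega⟩

theorem stmt16 {n : ℕ} (G : SimpleGraph (Fin n)) (hG : IsLaman G)
    (d : ℕ) (hd : 2 ≤ d) :
    ∃ p : Fin n → Fin d → ℝ, Function.Injective p ∧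
      (bearingLaplacian G p).rank = d * n - d - 1 := by
  classical
  simpa using stmt16_general G (by convert hG.1; simp) hG.isSparse d hd
end

section
/- If a graph G contains a spanning subgraph that is Laman, then G is generically bearing rigid in R^d for every d >= 2. -/
open Matrix

/-! The quadratic form of the bearing Laplacian is a sum of squares over the edges, so its kernel is
the space of bearing motions. When there are at least two points and they are distinct, translations
and scalings form a subspace of dimension `d + 1` in it; hence the rank is at most `d * n - d - 1`,
with equality exactly when the framework has no other bearing motion.

A Laman graph is built from an edge by Henneberg's two moves: some vertex `v` has degree at most
three, and if its neighbours are `a`, `b`, `c`, then for one of the three pairs, say `ab`, deleting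
`v` and adding the edge `ab` leaves a Laman graph, for otherwise tight sets through the three pairs
would merge into a tight set that is overfull once `v` is added. Both moves preserve the existence
of a rigid framework. A vertex attached to two old ones only has to stay off the line through them.
To replace the edge `ab`, first move `c` off the line `ab`, which is possible because maximal rank
is an open condition, and then put `v` on the line `ab`: the edges `va` and `vb` now force what `ab`
did, and `vc` fixes `v` on the line. -/

open scoped Finset Topology

namespace BearingRigidity

section SpannedEdges

variable {V : Type*} (G : SimpleGraph V)

open scoped Classical in
/-- The edges of `G` with both endpoints in `S`. -/
noncomputable def spannedEdges (S : Finset V) : Finset (Sym2 V) :=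
  {e ∈ S.sym2 | e ∈ G.edgeSet}

open scoped Classical in
/-- The neighbours of `v` in `G` that lie in `S`. -/
noncomputable def neighborsIn (S : Finset V) (v : V) : Finset V :=
  {w ∈ S | G.Adj v w}

variable {G}

lemma mem_spannedEdges {S : Finset V} {e : Sym2 V} :
    e ∈ spannedEdges G S ↔ e ∈ G.edgeSet ∧ ∀ v ∈ e, v ∈ S := by
  simp only [spannedEdges, Finset.mem_filter, Finset.mem_sym2_iff, and_comm]

lemma mk_mem_spannedEdges {S : Finset V} {a b : V} :
    s(a, b) ∈ spannedEdges G S ↔ G.Adj a b ∧ a ∈ S ∧ b ∈ S := by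
  simp only [mem_spannedEdges, SimpleGraph.mem_edgeSet, Sym2.ball]

lemma mem_neighborsIn {S : Finset V} {v w : V} :
    w ∈ neighborsIn G S v ↔ w ∈ S ∧ G.Adj v w := by
  simp only [neighborsIn, Finset.mem_filter]

lemma spannedEdges_mono {S T : Finset V} (h : S ⊆ T) : spannedEdges G S ⊆ spannedEdges G T :=
  fun _ he => mem_spannedEdges.mpr
    ⟨(mem_spannedEdges.mp he).1, fun v hv => h ((mem_spannedEdges.mp he).2 v hv)⟩

lemma spannedEdges_eq_empty {S : Finset V} (hS : #S ≤ 1) : spannedEdges G S = ∅ := by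
  refine Finset.eq_empty_of_forall_notMem fun e he => ?_
  induction e with
  | _ a b =>
    obtain ⟨hab, ha, hb⟩ := mk_mem_spannedEdges.mp he
    exact hab.ne (Finset.card_le_one.mp hS a ha b hb)

section

variable [DecidableEq V]

lemma spannedEdges_inter (S T : Finset V) :
    spannedEdges G (S ∩ T) = spannedEdges G S ∩ spannedEdges G T := by
  ext e
  simp only [mem_spannedEdges, Finset.mem_inter]
  grind

lemma disjoint_spannedEdges {S T : Finset V} (h : #(S ∩ T) ≤ 1) :
    Disjoint (spannedEdges G S) (spannedEdges G T) := by
  rw [Finset.disjoint_iff_inter_eq_empty, ← spannedEdges_inter, spannedEdges_eq_empty h]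

lemma spannedEdges_union_subset (S T : Finset V) :
    spannedEdges G S ∪ spannedEdges G T ⊆ spannedEdges G (S ∪ T) :=
  Finset.union_subset (spannedEdges_mono Finset.subset_union_left)
    (spannedEdges_mono Finset.subset_union_right)

lemma card_spannedEdges_add_le (S T : Finset V) :
    #(spannedEdges G S) + #(spannedEdges G T) ≤
      #(spannedEdges G (S ∪ T)) + #(spannedEdges G (S ∩ T)) := by
  rw [← Finset.card_union_add_card_inter, spannedEdges_inter]
  gcongr
  exact spannedEdges_union_subset S T

lemma card_spannedEdges_add_add_le {S T R : Finset V}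
    (hST : #(S ∩ T) ≤ 1) (hSR : #(S ∩ R) ≤ 1) (hTR : #(T ∩ R) ≤ 1) :
    #(spannedEdges G S) + #(spannedEdges G T) + #(spannedEdges G R) ≤
      #(spannedEdges G (S ∪ T ∪ R)) := by
  have hdisj : Disjoint (spannedEdges G S ∪ spannedEdges G T) (spannedEdges G R) :=
    Finset.disjoint_union_left.mpr ⟨disjoint_spannedEdges hSR, disjoint_spannedEdges hTR⟩
  rw [← Finset.card_union_of_disjoint (disjoint_spannedEdges hST),
    ← Finset.card_union_of_disjoint hdisj]
  exact Finset.card_le_card <| (Finset.union_subset_union_left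
    (spannedEdges_union_subset S T)).trans (spannedEdges_union_subset (S ∪ T) R)

lemma card_filter_mem_spannedEdges {S : Finset V} {v : V} (hv : v ∈ S) :
    #{e ∈ spannedEdges G S | v ∈ e} = #(neighborsIn G S v) := by
  rw [← Finset.card_image_of_injective (neighborsIn G S v)
    (f := fun w => s(v, w)) fun _ _ => Sym2.congr_right.mp]
  congr 1
  ext e
  simp only [Finset.mem_filter, Finset.mem_image, mem_neighborsIn]
  constructor
  · rintro ⟨he, w, rfl⟩
    obtain ⟨hadj, -, hw⟩ := mk_mem_spannedEdges.mp he
    exact ⟨w, ⟨hw, hadj⟩, rfl⟩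
  · rintro ⟨w, ⟨hw, hadj⟩, rfl⟩
    exact ⟨mk_mem_spannedEdges.mpr ⟨hadj, hv, hw⟩, Sym2.mem_mk_left v w⟩

lemma spannedEdges_erase (S : Finset V) (v : V) :
    spannedEdges G (S.erase v) = {e ∈ spannedEdges G S | v ∉ e} := by
  ext e
  simp only [Finset.mem_filter, mem_spannedEdges, Finset.mem_erase]
  grind

lemma neighborsIn_erase_self (S : Finset V) (v : V) :
    neighborsIn G (S.erase v) v = neighborsIn G S v := by
  ext w
  simp only [mem_neighborsIn, Finset.mem_erase]
  exact and_congr_left fun hadj => and_iff_right hadj.ne'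

lemma card_spannedEdges_erase_add {S : Finset V} {v : V} (hv : v ∈ S) :
    #(spannedEdges G (S.erase v)) + #(neighborsIn G S v) = #(spannedEdges G S) := by
  rw [spannedEdges_erase, ← card_filter_mem_spannedEdges hv, add_comm,
    Finset.card_filter_add_card_filter_not]

lemma spannedEdges_sup_edge {S : Finset V} {a b : V} (hab : a ≠ b) (ha : a ∈ S) (hb : b ∈ S) :
    spannedEdges (G ⊔ SimpleGraph.edge a b) S = insert s(a, b) (spannedEdges G S) := by
  ext e
  simp only [mem_spannedEdges, SimpleGraph.edgeSet_sup, SimpleGraph.edgeSet_edge_of_ne hab,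
    Set.mem_union, Set.mem_singleton_iff, Finset.mem_insert]
  grind

end

lemma spannedEdges_sup_edge_of_not_and_mem {S : Finset V} {a b : V} (h : ¬(a ∈ S ∧ b ∈ S)) :
    spannedEdges (G ⊔ SimpleGraph.edge a b) S = spannedEdges G S := by
  ext e
  induction e with
  | _ x y =>
    simp only [mk_mem_spannedEdges, SimpleGraph.sup_adj, SimpleGraph.edge_adj]
    grind

lemma sum_card_neighborsIn (S : Finset V) :
    ∑ v ∈ S, #(neighborsIn G S v) = 2 * #(spannedEdges G S) := by
  classical
  have hend : ∀ e ∈ spannedEdges G S, #{v ∈ S | v ∈ e} = 2 := fun e he => by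
    obtain ⟨hedge, hsub⟩ := mem_spannedEdges.mp he
    have hfilter : {v ∈ S | v ∈ e} = e.toFinset := by
      ext v
      simpa only [Finset.mem_filter, Sym2.mem_toFinset, and_iff_right_iff_imp] using hsub v
    rw [hfilter, Sym2.card_toFinset_of_not_isDiag e (G.not_isDiag_of_mem_edgeSet hedge)]
  calc ∑ v ∈ S, #(neighborsIn G S v)
      = ∑ v ∈ S, #{e ∈ spannedEdges G S | v ∈ e} :=
        Finset.sum_congr rfl fun v hv => (card_filter_mem_spannedEdges hv).symm
    _ = ∑ e ∈ spannedEdges G S, #{v ∈ S | v ∈ e} :=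
        Finset.sum_card_bipartiteAbove_eq_sum_card_bipartiteBelow _
    _ = 2 * #(spannedEdges G S) := by rw [Finset.sum_const_nat hend, mul_comm]

end SpannedEdges

section Sparsity

variable {V : Type*} {G : SimpleGraph V} {S T R U : Finset V}

/-- Laman's sparsity condition for the subgraph of `G` induced on `U`. -/
def IsSparseOn (G : SimpleGraph V) (U : Finset V) : Prop :=
  ∀ S ⊆ U, 2 ≤ #S → #(spannedEdges G S) ≤ 2 * #S - 3

/-- `S` spans at least `2 * #S - 3` edges, the largest number that sparsity allows. The inequality
is written without subtraction, so that no set with fewer than two vertices needs care. -/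
def IsTight (G : SimpleGraph V) (S : Finset V) : Prop :=
  2 * #S ≤ #(spannedEdges G S) + 3

/-- The subgraph of `G` induced on `U` is a Laman graph. The subtraction truncates exactly as in
`IsLaman`, so a set with at most one vertex qualifies. -/
def IsLamanOn (G : SimpleGraph V) (U : Finset V) : Prop :=
  #(spannedEdges G U) = 2 * #U - 3 ∧ IsSparseOn G U

lemma isLamanOn_univ_of_isLaman {n : ℕ} {G : SimpleGraph (Fin n)} (hG : IsLaman G) :
    IsLamanOn G Finset.univ := by
  classical
  refine ⟨?_, fun S _ hS => ?_⟩
  · rw [Finset.card_univ, Fintype.card_fin, ← hG.1]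
    congr 1
    ext e
    simp [mem_spannedEdges]
  · refine le_of_eq_of_le ?_ (hG.2 S hS)
    congr 1
    ext e
    simp [mem_spannedEdges]

lemma IsSparseOn.mono (hU : IsSparseOn G U) (hSU : S ⊆ U) : IsSparseOn G S :=
  fun _ hTS => hU _ (hTS.trans hSU)

lemma IsSparseOn.exists_card_neighborsIn_le_three (hU : IsSparseOn G U) (hcard : 2 ≤ #U) :
    ∃ v ∈ U, #(neighborsIn G U v) ≤ 3 := by
  have hsum : ∑ v ∈ U, #(neighborsIn G U v) < ∑ _v ∈ U, 4 := by
    have := hU U Finset.Subset.rfl hcard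
    rw [sum_card_neighborsIn, Finset.sum_const, smul_eq_mul]
    omega
  obtain ⟨v, hv, hlt⟩ := Finset.exists_lt_of_sum_lt hsum
  exact ⟨v, hv, Nat.lt_succ_iff.mp hlt⟩

lemma IsSparseOn.isLamanOn_sup_edge {a b : V} (hU : IsSparseOn G U)
    (hcard : #(spannedEdges G U) + 4 = 2 * #U) (hab : a ≠ b) (ha : a ∈ U) (hb : b ∈ U)
    (hloose : ∀ S ⊆ U, a ∈ S → b ∈ S → ¬IsTight G S) :
    IsLamanOn (G ⊔ SimpleGraph.edge a b) U := by
  classical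
  have hnot : ¬G.Adj a b := fun hadj => by
    refine hloose {a, b} (Finset.insert_subset ha (Finset.singleton_subset_iff.mpr hb))
      (by simp) (by simp) ?_
    have hspan : 0 < #(spannedEdges G {a, b}) :=
      Finset.card_pos.mpr ⟨s(a, b), mk_mem_spannedEdges.mpr ⟨hadj, by simp, by simp⟩⟩
    rw [IsTight, Finset.card_pair hab]
    omega
  have hspan : ∀ S : Finset V, a ∈ S → b ∈ S →
      #(spannedEdges (G ⊔ SimpleGraph.edge a b) S) = #(spannedEdges G S) + 1 :=
    fun S haS hbS => by
      rw [spannedEdges_sup_edge hab haS hbS, Finset.card_insert_of_notMem]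
      exact fun hmem => hnot (mk_mem_spannedEdges.mp hmem).1
  refine ⟨by rw [hspan U ha hb]; omega, fun S hSU hS => ?_⟩
  by_cases hmem : a ∈ S ∧ b ∈ S
  · have hS' := hloose S hSU hmem.1 hmem.2
    rw [hspan S hmem.1 hmem.2]
    unfold IsTight at hS'
    omega
  · rw [spannedEdges_sup_edge_of_not_and_mem hmem]
    exact hU S hSU hS

lemma IsSparseOn.isTight_union [DecidableEq V] (hU : IsSparseOn G U) (hSU : S ⊆ U)
    (hS : IsTight G S) (hT : IsTight G T) (hST : 2 ≤ #(S ∩ T)) : IsTight G (S ∪ T) := by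
  have hinter := hU (S ∩ T) (Finset.inter_subset_left.trans hSU) hST
  have hspan := card_spannedEdges_add_le (G := G) S T
  have hcard := Finset.card_union_add_card_inter S T
  unfold IsTight at *
  omega

lemma IsTight.union_union [DecidableEq V] (hS : IsTight G S) (hT : IsTight G T) (hR : IsTight G R)
    (hST : #(S ∩ T) = 1) (hSR : #(S ∩ R) ≤ 1) (hTR : #(T ∩ R) ≤ 1)
    (hSTR : 2 ≤ #((S ∪ T) ∩ R)) : IsTight G (S ∪ T ∪ R) := by
  have hspan := card_spannedEdges_add_add_le (G := G) hST.le hSR hTR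
  have hcard := Finset.card_union_add_card_inter S T
  have hcard' := Finset.card_union_add_card_inter (S ∪ T) R
  unfold IsTight at *
  omega

lemma IsSparseOn.card_neighborsIn_le_two [DecidableEq V] {v : V} (hU : IsSparseOn G U) (hv : v ∈ U)
    (hSU : S ⊆ U.erase v) (hS : S.Nonempty) (htight : IsTight G S) :
    #(neighborsIn G S v) ≤ 2 := by
  have hvS : v ∉ S := fun h => Finset.notMem_erase v U (hSU h)
  have hins : insert v S ⊆ U := Finset.insert_subset hv (hSU.trans (Finset.erase_subset v U))
  have hcard := Finset.card_insert_of_notMem hvS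
  have hsparse := hU _ hins (by have := hS.card_pos; omega)
  have hspan := card_spannedEdges_erase_add (G := G) (Finset.mem_insert_self v S)
  rw [← neighborsIn_erase_self, Finset.erase_insert hvS] at hspan
  unfold IsTight at htight
  omega

lemma IsSparseOn.exists_isTight_of_pairs {a b c : V} (hU : IsSparseOn G U)
    (hbc : b ≠ c) (htab : ∃ S ⊆ U, a ∈ S ∧ b ∈ S ∧ IsTight G S)
    (htac : ∃ S ⊆ U, a ∈ S ∧ c ∈ S ∧ IsTight G S) (htbc : ∃ S ⊆ U, b ∈ S ∧ c ∈ S ∧ IsTight G S) :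
    ∃ S ⊆ U, a ∈ S ∧ b ∈ S ∧ c ∈ S ∧ IsTight G S := by
  classical
  obtain ⟨S, hSU, haS, hbS, hS⟩ := htab
  obtain ⟨T, hTU, haT, hcT, hT⟩ := htac
  obtain ⟨R, hRU, hbR, hcR, hR⟩ := htbc
  by_cases hST : 2 ≤ #(S ∩ T)
  · exact ⟨S ∪ T, Finset.union_subset hSU hTU, by grind, by grind, by grind,
      hU.isTight_union hSU hS hT hST⟩
  by_cases hSR : 2 ≤ #(S ∩ R)
  · exact ⟨S ∪ R, Finset.union_subset hSU hRU, by grind, by grind, by grind,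
      hU.isTight_union hSU hS hR hSR⟩
  by_cases hTR : 2 ≤ #(T ∩ R)
  · exact ⟨T ∪ R, Finset.union_subset hTU hRU, by grind, by grind, by grind,
      hU.isTight_union hTU hT hR hTR⟩
  have hSTpos : 0 < #(S ∩ T) := Finset.card_pos.mpr ⟨a, Finset.mem_inter.mpr ⟨haS, haT⟩⟩
  have hSTR : 2 ≤ #((S ∪ T) ∩ R) := by
    rw [← Finset.card_pair hbc]
    exact Finset.card_le_card (by grind)
  exact ⟨S ∪ T ∪ R, Finset.union_subset (Finset.union_subset hSU hTU) hRU,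
    by grind, by grind, by grind,
    hS.union_union hT hR (by omega) (by omega) (by omega) hSTR⟩

lemma IsSparseOn.exists_isLamanOn_sup_edge [DecidableEq V] {v : V} (hU : IsSparseOn G U)
    (hcard : #(spannedEdges G U) + 3 = 2 * #U) (hv : v ∈ U) (hdeg : #(neighborsIn G U v) = 3) :
    ∃ a b c, a ≠ b ∧ a ≠ c ∧ b ≠ c ∧ neighborsIn G (U.erase v) v = {a, b, c} ∧
      IsLamanOn (G ⊔ SimpleGraph.edge a b) (U.erase v) := by
  obtain ⟨a, b, c, hab, hac, hbc, hN⟩ := Finset.card_eq_three.mp hdeg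
  rw [← neighborsIn_erase_self] at hN
  have hcardW : #(spannedEdges G (U.erase v)) + 4 = 2 * #(U.erase v) := by
    have hspan := card_spannedEdges_erase_add (G := G) hv
    have herase := Finset.card_erase_add_one hv
    omega
  have hW : IsSparseOn G (U.erase v) := hU.mono (Finset.erase_subset v U)
  by_contra! hfail
  have htight : ∀ x y z, x ≠ y → x ≠ z → y ≠ z → neighborsIn G (U.erase v) v = {x, y, z} →
      ∃ S ⊆ U.erase v, x ∈ S ∧ y ∈ S ∧ IsTight G S := fun x y z hxy hxz hyz hxyz => by
    have hmem : ∀ w ∈ ({x, y, z} : Finset V), w ∈ U.erase v := fun w hw =>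
      (mem_neighborsIn.mp (hxyz ▸ hw)).1
    by_contra! hloose
    exact hfail x y z hxy hxz hyz hxyz
      (hW.isLamanOn_sup_edge hcardW hxy (hmem x (by simp)) (hmem y (by simp)) hloose)
  obtain ⟨S, hSU, haS, hbS, hcS, hS⟩ := hW.exists_isTight_of_pairs hbc
    (htight a b c hab hac hbc hN)
    (htight a c b hac hab hbc.symm (by rw [hN, Finset.pair_comm]))
    (htight b c a hbc hab.symm hac.symm (by rw [hN]; grind))
  have hsub : neighborsIn G (U.erase v) v ⊆ neighborsIn G S v := fun x hx =>
    mem_neighborsIn.mpr ⟨by grind, (mem_neighborsIn.mp hx).2⟩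
  have hle := hU.card_neighborsIn_le_two hv hSU ⟨a, haS⟩ hS
  have := Finset.card_le_card hsub
  rw [neighborsIn_erase_self] at this
  omega

lemma IsLamanOn.two_le_card_neighborsIn {v : V} (hU : IsLamanOn G U) (hcard : 3 ≤ #U) (hv : v ∈ U) :
    2 ≤ #(neighborsIn G U v) := by
  classical
  have hspan := card_spannedEdges_erase_add (G := G) hv
  have herase := Finset.card_erase_add_one hv
  have hsparse := hU.2 _ (Finset.erase_subset v U) (by omega)
  have := hU.1
  omega

end Sparsity

section Henneberg

variable {V : Type*} [DecidableEq V]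

/-- `IsHenneberg G U` says that the induced subgraph of `G` on `U` contains, as a spanning subgraph,
a graph built from a single edge by Henneberg's two moves: attaching a new vertex to two old ones
(`typeI`), and replacing an edge `ab` by a new vertex attached to `a`, `b` and a third old vertex
(`typeII`). The graph before the second move is `G` itself with `ab` put back. -/
inductive IsHenneberg : SimpleGraph V → Finset V → Prop
  | pair {G : SimpleGraph V} {a b : V} (hab : G.Adj a b) : IsHenneberg G {a, b}
  | typeI {G : SimpleGraph V} {W : Finset V} {v a b : V} (hv : v ∉ W) (ha : a ∈ W) (hb : b ∈ W)
      (hab : a ≠ b) (hva : G.Adj v a) (hvb : G.Adj v b) (hW : IsHenneberg G W) :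
      IsHenneberg G (insert v W)
  | typeII {G : SimpleGraph V} {W : Finset V} {v a b c : V} (hv : v ∉ W)
      (ha : a ∈ W) (hb : b ∈ W) (hc : c ∈ W) (hab : a ≠ b) (hac : a ≠ c) (hbc : b ≠ c)
      (hva : G.Adj v a) (hvb : G.Adj v b) (hvc : G.Adj v c)
      (hW : IsHenneberg (G ⊔ SimpleGraph.edge a b) W) : IsHenneberg G (insert v W)

lemma IsLamanOn.isHenneberg_of_card_eq_two {G : SimpleGraph V} {U : Finset V}
    (hU : IsLamanOn G U) (hcard : #U = 2) : IsHenneberg G U := by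
  obtain ⟨a, b, -, rfl⟩ := Finset.card_eq_two.mp hcard
  obtain ⟨e, he⟩ : (spannedEdges G {a, b}).Nonempty := by
    rw [← Finset.card_pos, hU.1, hcard]
    norm_num
  induction e with
  | _ x y =>
    obtain ⟨hadj, hx, hy⟩ := mk_mem_spannedEdges.mp he
    have hne := hadj.ne
    have hadj' := hadj.symm
    exact .pair (by grind)

theorem IsLamanOn.isHenneberg {G : SimpleGraph V} {U : Finset V} (hU : IsLamanOn G U)
    (hcard : 2 ≤ #U) : IsHenneberg G U := by
  induction hm : #U generalizing G U with
  | zero => omega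
  | succ m ih =>
    obtain hcard2 | hcard3 : #U = 2 ∨ 3 ≤ #U := by omega
    · exact hU.isHenneberg_of_card_eq_two hcard2
    obtain ⟨v, hv, hdeg⟩ := hU.2.exists_card_neighborsIn_le_three hcard
    have hdeg' := hU.two_le_card_neighborsIn hcard3 hv
    have herase := Finset.card_erase_add_one hv
    have hvW : v ∉ U.erase v := Finset.notMem_erase v U
    rw [← Finset.insert_erase hv]
    obtain hdeg2 | hdeg3 : #(neighborsIn G U v) = 2 ∨ #(neighborsIn G U v) = 3 := by omega
    · have hW : IsLamanOn G (U.erase v) := by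
        refine ⟨?_, hU.2.mono (Finset.erase_subset v U)⟩
        have hspan := card_spannedEdges_erase_add (G := G) hv
        have := hU.1
        omega
      obtain ⟨a, b, hab, hN⟩ := Finset.card_eq_two.mp hdeg2
      rw [← neighborsIn_erase_self] at hN
      have hadj : ∀ x ∈ ({a, b} : Finset V), x ∈ U.erase v ∧ G.Adj v x := fun x hx =>
        mem_neighborsIn.mp (hN ▸ hx)
      obtain ⟨⟨ha, hva⟩, hb, hvb⟩ := And.intro (hadj a (by simp)) (hadj b (by simp))
      exact .typeI hvW ha hb hab hva hvb (ih hW (by omega) (by omega))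
    · obtain ⟨a, b, c, hab, hac, hbc, hN, hW⟩ :=
        hU.2.exists_isLamanOn_sup_edge (by have := hU.1; omega) hv hdeg3
      have hadj : ∀ x ∈ ({a, b, c} : Finset V), x ∈ U.erase v ∧ G.Adj v x := fun x hx =>
        mem_neighborsIn.mp (hN ▸ hx)
      obtain ⟨⟨ha, hva⟩, ⟨hb, hvb⟩, hc, hvc⟩ :=
        And.intro (hadj a (by simp)) (And.intro (hadj b (by simp)) (hadj c (by simp)))
      exact .typeII hvW ha hb hc hab hac hbc hva hvb hvc (ih hW (by omega) (by omega))

end Henneberg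

section Motion

variable {V M : Type*} [AddCommGroup M] [Module ℝ M] {G H : SimpleGraph V} {U W : Set V}
  {p q u : V → M} {a b v : V}

/-- `u` assigns to each vertex a velocity such that, to first order, every edge of `G` within `U`
keeps its direction in the framework `p`. -/
def IsBearingMotionOn (G : SimpleGraph V) (U : Set V) (p u : V → M) : Prop :=
  ∀ i ∈ U, ∀ j ∈ U, G.Adj i j → u i - u j ∈ ℝ ∙ (p i - p j)

/-- Infinitesimal bearing rigidity of the framework `p` on `U`: scalings and translations are the
only bearing motions. -/
def IsBearingRigidOn (G : SimpleGraph V) (U : Set V) (p : V → M) : Prop :=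
  ∀ u, IsBearingMotionOn G U p u → ∃ (c : ℝ) (w : M), ∀ i ∈ U, u i = c • p i + w

lemma IsBearingRigidOn.mono (hGH : G ≤ H) (hG : IsBearingRigidOn G U p) :
    IsBearingRigidOn H U p :=
  fun u hu => hG u fun i hi j hj hij => hu i hi j hj (hGH hij)

lemma IsBearingRigidOn.congr (hp : IsBearingRigidOn G U p) (hpq : U.EqOn p q) :
    IsBearingRigidOn G U q := fun u hu => by
  obtain ⟨c, w, hcw⟩ := hp u fun i hi j hj hij => by
    rw [hpq hi, hpq hj]
    exact hu i hi j hj hij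
  exact ⟨c, w, fun i hi => by rw [hcw i hi, hpq hi]⟩

lemma isBearingRigidOn_pair (hab : G.Adj a b) : IsBearingRigidOn G {a, b} p := fun u hu => by
  obtain ⟨c, hc⟩ := Submodule.mem_span_singleton.mp (hu a (by simp) b (by simp) hab)
  refine ⟨c, u b - c • p b, fun i hi => ?_⟩
  obtain rfl | rfl := hi
  · rw [add_sub_left_comm, ← smul_sub, hc, add_sub_cancel]
  · rw [add_sub_cancel]

lemma isBearingRigidOn_univ_induce_iff :
    IsBearingRigidOn (G.induce U) Set.univ (U.domRestrict p) ↔ IsBearingRigidOn G U p := by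
  classical
  refine ⟨fun h u hu => ?_, fun h u hu => ?_⟩
  · obtain ⟨c, w, hcw⟩ := h (U.domRestrict u) fun i _ j _ hij => hu i i.2 j j.2 hij
    exact ⟨c, w, fun i hi => hcw ⟨i, hi⟩ (Set.mem_univ _)⟩
  · let u' : V → M := fun i => if hi : i ∈ U then u ⟨i, hi⟩ else 0
    have hu' : ∀ i : U, u' i = u i := fun i => dif_pos i.2
    obtain ⟨c, w, hcw⟩ := h u' fun i hi j hj hij => by
      rw [hu' ⟨i, hi⟩, hu' ⟨j, hj⟩]
      exact hu ⟨i, hi⟩ (Set.mem_univ _) ⟨j, hj⟩ (Set.mem_univ _) hij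
    exact ⟨c, w, fun i _ => (hu' i).symm.trans (hcw i i.2)⟩

/-- After subtracting a trivial motion of `W`, the velocity of `v` is parallel to two independent
directions. -/
lemma IsBearingRigidOn.insert_vertex (hW : IsBearingRigidOn G W p) (ha : a ∈ W) (hb : b ∈ W)
    (hva : G.Adj v a) (hvb : G.Adj v b)
    (hind : LinearIndependent ℝ ![p v - p a, p v - p b]) :
    IsBearingRigidOn G (insert v W) p := fun u hu => by
  obtain ⟨c, w, hcw⟩ := hW u fun i hi j hj => hu i (.inr hi) j (.inr hj)
  have hspan : ∀ x ∈ W, G.Adj v x → ∃ r : ℝ, r • (p v - p x) = u v - (c • p v + w) :=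
    fun x hx hvx => by
      obtain ⟨r, hr⟩ := Submodule.mem_span_singleton.mp (hu v (.inl rfl) x (.inr hx) hvx)
      refine ⟨r - c, ?_⟩
      rw [sub_smul, hr, hcw x hx]
      module
  obtain ⟨r, hr⟩ := hspan a ha hva
  obtain ⟨s, hs⟩ := hspan b hb hvb
  have hr0 : r = 0 := (hind.eq_zero_of_pair' (hr.trans hs.symm)).1
  have hzero : u v - (c • p v + w) = 0 := by rw [← hr, hr0, zero_smul]
  refine ⟨c, w, fun i hi => ?_⟩
  obtain rfl | hi := hi
  · exact sub_eq_zero.mp hzero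
  · exact hcw i hi

/-- Both halves of the subdivided edge are parallel to the whole, so a motion keeping their
directions keeps that of `ab`. -/
lemma IsBearingRigidOn.of_sup_edge (hU : IsBearingRigidOn (G ⊔ SimpleGraph.edge a b) U p)
    (hv : v ∈ U) (hva : G.Adj v a) (hvb : G.Adj v b)
    {t : ℝ} (hpv : p v = AffineMap.lineMap (p a) (p b) t) : IsBearingRigidOn G U p := fun u hu => by
  have hva' : p v - p a ∈ ℝ ∙ (p a - p b) := by
    refine Submodule.mem_span_singleton.mpr ⟨-t, ?_⟩
    rw [hpv, AffineMap.lineMap_apply_module']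
    module
  have hvb' : p v - p b ∈ ℝ ∙ (p a - p b) := by
    refine Submodule.mem_span_singleton.mpr ⟨1 - t, ?_⟩
    rw [hpv, AffineMap.lineMap_apply_module']
    module
  have hedge : a ∈ U → b ∈ U → u a - u b ∈ ℝ ∙ (p a - p b) := fun ha hb => by
    rw [← sub_sub_sub_cancel_left (u b) (u a) (u v)]
    exact sub_mem ((Submodule.span_singleton_le_iff_mem _ _).mpr hvb' (hu v hv b hb hvb))
      ((Submodule.span_singleton_le_iff_mem _ _).mpr hva' (hu v hv a ha hva))
  refine hU u fun i hi j hj hij => ?_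
  rw [SimpleGraph.sup_adj, SimpleGraph.edge_adj] at hij
  obtain hij | ⟨⟨rfl, rfl⟩ | ⟨rfl, rfl⟩, -⟩ := hij
  · exact hu i hi j hj hij
  · exact hedge hi hj
  · rw [← neg_mem_iff, neg_sub, ← Submodule.span_neg, Set.neg_singleton, neg_sub]
    exact hedge hj hi

/-- The velocities of `p` under infinitesimal scalings and translations. -/
def trivialMotion (p : V → M) : ℝ × M →ₗ[ℝ] V → M :=
  LinearMap.pi fun i => (LinearMap.fst ℝ ℝ M).smulRight (p i) + LinearMap.snd ℝ ℝ M

lemma trivialMotion_apply (x : ℝ × M) (i : V) : trivialMotion p x i = x.1 • p i + x.2 := rfl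

lemma trivialMotion_injective [Nontrivial V] (hp : Function.Injective p) :
    Function.Injective (trivialMotion p) := by
  rw [injective_iff_map_eq_zero]
  intro x hx
  have happ : ∀ i, x.1 • p i + x.2 = 0 := congrFun hx
  obtain ⟨i, j, hij⟩ := exists_pair_ne V
  have hscale : x.1 = 0 := by
    have hsub : x.1 • (p i - p j) = 0 := by
      rw [smul_sub, ← add_sub_add_right_eq_sub _ _ x.2, happ, happ, sub_zero]
    exact (smul_eq_zero.mp hsub).resolve_right (sub_ne_zero.mpr (hp.ne hij))
  have htranslation : x.2 = 0 := by rw [← happ i, hscale, zero_smul, zero_add]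
  exact Prod.ext hscale htranslation

lemma finrank_range_trivialMotion [Module.Finite ℝ M] [Nontrivial V] (hp : Function.Injective p) :
    Module.finrank ℝ (LinearMap.range (trivialMotion p)) = Module.finrank ℝ M + 1 := by
  rw [LinearMap.finrank_range_of_inj (trivialMotion_injective hp), Module.finrank_prod,
    Module.finrank_self, add_comm]

/-- The space of all bearing motions of the framework `p`. -/
def bearingMotions (G : SimpleGraph V) (p : V → M) : Submodule ℝ (V → M) where
  carrier := {u | IsBearingMotionOn G Set.univ p u}
  zero_mem' i _ j _ _ := by simp
  add_mem' hu hw i hi j hj hij := by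
    rw [Pi.add_apply, Pi.add_apply, add_sub_add_comm]
    exact add_mem (hu i hi j hj hij) (hw i hi j hj hij)
  smul_mem' c u hu i hi j hj hij := by
    rw [Pi.smul_apply, Pi.smul_apply, ← smul_sub]
    exact Submodule.smul_mem _ c (hu i hi j hj hij)

lemma range_trivialMotion_le : LinearMap.range (trivialMotion p) ≤ bearingMotions G p := by
  rintro _ ⟨x, rfl⟩ i _ j _ _
  refine Submodule.mem_span_singleton.mpr ⟨x.1, ?_⟩
  rw [trivialMotion_apply, trivialMotion_apply, add_sub_add_right_eq_sub, smul_sub]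

lemma isBearingRigidOn_univ_iff_bearingMotions_le :
    IsBearingRigidOn G Set.univ p ↔ bearingMotions G p ≤ LinearMap.range (trivialMotion p) :=
  forall₂_congr fun u _ => by
    simp only [Set.mem_univ, forall_const, LinearMap.mem_range, Prod.exists, funext_iff,
      trivialMotion_apply, eq_comm]

end Motion

section Projection

variable {d : ℕ}

lemma proj_mulVec (y x : Fin d → ℝ) : proj y *ᵥ x = x - ((y ⬝ᵥ y)⁻¹ * (y ⬝ᵥ x)) • y := by
  rw [proj, sub_mulVec, one_mulVec, smul_mulVec, vecMulVec_mulVec, op_smul_eq_smul, smul_smul]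

lemma proj_neg (y : Fin d → ℝ) : proj (-y) = proj y := by
  rw [proj, proj, neg_dotProduct_neg, neg_vecMulVec, vecMulVec_neg, neg_neg]

lemma proj_mulVec_eq_zero_iff {y x : Fin d → ℝ} : proj y *ᵥ x = 0 ↔ x ∈ ℝ ∙ y := by
  rw [proj_mulVec, sub_eq_zero, Submodule.mem_span_singleton]
  refine ⟨fun h => ⟨_, h.symm⟩, ?_⟩
  rintro ⟨c, rfl⟩
  obtain rfl | hy := eq_or_ne y 0
  · simp
  · rw [dotProduct_smul, smul_eq_mul, mul_comm c,
      inv_mul_cancel_left₀ (dotProduct_self_eq_zero.not.mpr hy)]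

lemma dotProduct_proj_mulVec (y x : Fin d → ℝ) :
    x ⬝ᵥ (proj y *ᵥ x) = (proj y *ᵥ x) ⬝ᵥ (proj y *ᵥ x) := by
  have horth : y ⬝ᵥ (proj y *ᵥ x) = 0 := by
    obtain rfl | hy := eq_or_ne y 0
    · exact zero_dotProduct _
    · rw [proj_mulVec, dotProduct_sub, dotProduct_smul, smul_eq_mul, mul_right_comm,
        inv_mul_cancel₀ (dotProduct_self_eq_zero.not.mpr hy), one_mul, sub_self]
  nth_rw 2 [proj_mulVec]
  rw [sub_dotProduct, smul_dotProduct, horth, smul_zero, sub_zero]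

lemma continuousAt_proj {y : Fin d → ℝ} (hy : y ≠ 0) : ContinuousAt proj y := by
  have hyy : y ⬝ᵥ y ≠ 0 := dotProduct_self_eq_zero.not.mpr hy
  have hdot : Continuous fun x : Fin d → ℝ => x ⬝ᵥ x := continuous_id.dotProduct continuous_id
  have hvec : Continuous fun x : Fin d → ℝ => vecMulVec x x :=
    continuous_id.matrix_vecMulVec continuous_id
  exact continuousAt_const.sub ((hdot.continuousAt.inv₀ hyy).smul hvec.continuousAt)

end Projection

section Laplacian

variable {V : Type*} [Fintype V] {d : ℕ} {G : SimpleGraph V} {p : V → Fin d → ℝ}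

open scoped Classical in
lemma curry_bearingLaplacian_mulVec (u : V × Fin d → ℝ) (i : V) :
    Function.curry (bearingLaplacian G p *ᵥ u) i =
      ∑ j, if G.Adj i j then
        proj (p i - p j) *ᵥ (Function.curry u i - Function.curry u j) else 0 := by
  have hblock : ∀ j, (bearingLaplacian G p).submatrix (Prod.mk i) (Prod.mk j) =
      (if i = j then ∑ m with G.Adj i m, proj (p i - p m) else 0) -
        if G.Adj i j then proj (p i - p j) else 0 := fun j => by
    ext k l
    rw [submatrix_apply, bearingLaplacian, Matrix.sub_apply]
    simp only [← neg_sub (p i), proj_neg]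
    obtain rfl | hij := eq_or_ne i j
    · simp
    · by_cases hadj : G.Adj i j <;> simp [hij, hadj]
  calc Function.curry (bearingLaplacian G p *ᵥ u) i
      = ∑ j, (bearingLaplacian G p).submatrix (Prod.mk i) (Prod.mk j) *ᵥ Function.curry u j := by
        ext k
        rw [Finset.sum_apply]
        exact Fintype.sum_prod_type _
    _ = (∑ j, (if i = j then ∑ m with G.Adj i m, proj (p i - p m) else 0) *ᵥ Function.curry u j) -
          ∑ j, (if G.Adj i j then proj (p i - p j) else 0) *ᵥ Function.curry u j := by
        simp only [hblock, sub_mulVec, Finset.sum_sub_distrib]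
    _ = (∑ j with G.Adj i j, proj (p i - p j)) *ᵥ Function.curry u i -
          ∑ j, (if G.Adj i j then proj (p i - p j) else 0) *ᵥ Function.curry u j := by
        rw [Fintype.sum_eq_single i fun j hij => by rw [if_neg hij.symm, zero_mulVec], if_pos rfl]
    _ = _ := by
        rw [Finset.sum_filter, sum_mulVec, ← Finset.sum_sub_distrib]
        refine Finset.sum_congr rfl fun j _ => ?_
        rw [← mulVec_sub]
        split_ifs
        exacts [rfl, zero_mulVec _]

open scoped Classical in
lemma two_mul_dotProduct_bearingLaplacian_mulVec (u : V × Fin d → ℝ) :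
    2 * (u ⬝ᵥ (bearingLaplacian G p *ᵥ u)) =
      ∑ i, ∑ j, if G.Adj i j then
        (Function.curry u i - Function.curry u j) ⬝ᵥ
          (proj (p i - p j) *ᵥ (Function.curry u i - Function.curry u j)) else 0 := by
  have hsum : u ⬝ᵥ (bearingLaplacian G p *ᵥ u) =
      ∑ i, ∑ j, if G.Adj i j then Function.curry u i ⬝ᵥ
        (proj (p i - p j) *ᵥ (Function.curry u i - Function.curry u j)) else 0 := by
    calc u ⬝ᵥ (bearingLaplacian G p *ᵥ u)
        = ∑ i, Function.curry u i ⬝ᵥ Function.curry (bearingLaplacian G p *ᵥ u) i :=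
          Fintype.sum_prod_type _
      _ = _ := by
          simp only [curry_bearingLaplacian_mulVec, dotProduct_sum, apply_ite, dotProduct_zero]
  have hswap : u ⬝ᵥ (bearingLaplacian G p *ᵥ u) =
      ∑ i, ∑ j, if G.Adj i j then -(Function.curry u j ⬝ᵥ
        (proj (p i - p j) *ᵥ (Function.curry u i - Function.curry u j))) else 0 := by
    rw [hsum, Finset.sum_comm]
    refine Finset.sum_congr rfl fun i _ => Finset.sum_congr rfl fun j _ => ?_
    rw [G.adj_comm, ← neg_sub (p i), proj_neg, ← neg_sub (Function.curry u i), mulVec_neg,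
      dotProduct_neg]
  rw [two_mul]
  nth_rw 1 [hsum]
  rw [hswap]
  simp only [← Finset.sum_add_distrib, ite_add_ite, add_zero, ← sub_eq_add_neg, ← sub_dotProduct]

theorem bearingLaplacian_mulVec_eq_zero_iff {u : V × Fin d → ℝ} :
    bearingLaplacian G p *ᵥ u = 0 ↔ IsBearingMotionOn G Set.univ p (Function.curry u) := by
  classical
  constructor
  · intro hu i _ j _ hij
    have hnonneg : ∀ i j, 0 ≤ if G.Adj i j then
        (Function.curry u i - Function.curry u j) ⬝ᵥ
          (proj (p i - p j) *ᵥ (Function.curry u i - Function.curry u j)) else 0 := fun i j => by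
      rw [dotProduct_proj_mulVec]
      split_ifs
      exacts [Finset.sum_nonneg fun _ _ => mul_self_nonneg _, le_rfl]
    have hzero := two_mul_dotProduct_bearingLaplacian_mulVec (G := G) (p := p) u
    rw [hu, dotProduct_zero, mul_zero, eq_comm,
      Fintype.sum_eq_zero_iff_of_nonneg fun i => Finset.sum_nonneg fun j _ => hnonneg i j] at hzero
    have hterm := (Fintype.sum_eq_zero_iff_of_nonneg (hnonneg i)).mp (congrFun hzero i)
    have := congrFun hterm j
    rw [if_pos hij, dotProduct_proj_mulVec] at this
    exact proj_mulVec_eq_zero_iff.mp (dotProduct_self_eq_zero.mp this)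
  · intro hu
    funext ⟨i, k⟩
    refine congrFun ((curry_bearingLaplacian_mulVec u i).trans
      (Finset.sum_eq_zero fun j _ => ?_)) k
    split_ifs with hij
    · exact proj_mulVec_eq_zero_iff.mpr (hu i (Set.mem_univ i) j (Set.mem_univ j) hij)
    · rfl

end Laplacian

section Rank

variable {V : Type*} [Fintype V] {d : ℕ} {G : SimpleGraph V} {p : V → Fin d → ℝ}

lemma map_curry_ker_bearingLaplacian :
    (LinearMap.ker (bearingLaplacian G p).mulVecLin).map
      (LinearEquiv.curry ℝ ℝ V (Fin d)).toLinearMap = bearingMotions G p := by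
  rw [Submodule.map_equiv_eq_comap_symm]
  ext u
  exact bearingLaplacian_mulVec_eq_zero_iff (u := Function.uncurry u)

theorem rank_bearingLaplacian_add_finrank_bearingMotions :
    (bearingLaplacian G p).rank + Module.finrank ℝ (bearingMotions G p) =
      d * Fintype.card V := by
  rw [← map_curry_ker_bearingLaplacian, LinearEquiv.finrank_map_eq, rank,
    LinearMap.finrank_range_add_finrank_ker, Module.finrank_fintype_fun_eq_card,
    Fintype.card_prod, Fintype.card_fin, mul_comm]

lemma rank_bearingLaplacian_le [Nontrivial V] (hp : Function.Injective p) :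
    (bearingLaplacian G p).rank + (d + 1) ≤ d * Fintype.card V := by
  have hle := Submodule.finrank_mono (range_trivialMotion_le (G := G) (p := p))
  rw [finrank_range_trivialMotion hp, Module.finrank_fin_fun] at hle
  exact (Nat.add_le_add_left hle _).trans_eq rank_bearingLaplacian_add_finrank_bearingMotions

theorem isBearingRigidOn_univ_iff_le_rank [Nontrivial V] (hp : Function.Injective p) :
    IsBearingRigidOn G Set.univ p ↔
      d * Fintype.card V ≤ (bearingLaplacian G p).rank + (d + 1) := by
  have hrange := finrank_range_trivialMotion hp
  rw [Module.finrank_fin_fun] at hrange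
  rw [isBearingRigidOn_univ_iff_bearingMotions_le,
    ← rank_bearingLaplacian_add_finrank_bearingMotions (G := G) (p := p), ← hrange,
    add_le_add_iff_left]
  exact ⟨Submodule.finrank_mono,
    fun h => (Submodule.eq_of_le_of_finrank_le range_trivialMotion_le h).ge⟩

lemma rank_bearingLaplacian_of_subsingleton [Subsingleton V] :
    (bearingLaplacian G p).rank = 0 := by
  have hzero : bearingLaplacian G p = 0 := by
    ext ⟨i, k⟩ ⟨j, l⟩
    simp [bearingLaplacian, Subsingleton.elim _ j]
  rw [hzero, rank_zero]

end Rank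

section Openness

lemma isOpen_setOfPred_le_matrixRank {m n : Type*} [Finite m] [Fintype n] (k : ℕ) :
    IsOpen {A : Matrix m n ℝ | k ≤ A.rank} := by
  classical
  have := Fintype.ofFinite m
  let toCLM : Matrix m n ℝ →ₗ[ℝ] (n → ℝ) →L[ℝ] (m → ℝ) :=
    LinearMap.toContinuousLinearMap.toLinearMap ∘ₗ Matrix.toLin'.toLinearMap
  convert (isOpen_setOfPred_nat_le_rank (𝕜 := ℝ) k).preimage
    toCLM.continuous_of_finiteDimensional using 1
  ext A
  rw [Set.mem_preimage, Set.mem_ofPred_eq, Set.mem_ofPred_eq]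
  change k ≤ Module.finrank ℝ _ ↔ (k : Cardinal) ≤ (Matrix.toLin' A).rank
  rw [LinearMap.rank, ← Module.finrank_eq_rank, Nat.cast_le]
  rfl

variable {V : Type*} {d : ℕ} {G : SimpleGraph V} {p : V → Fin d → ℝ}

lemma continuousAt_bearingLaplacian [Fintype V] (hp : Function.Injective p) :
    ContinuousAt (bearingLaplacian G) p := by
  classical
  have hproj : ∀ i j, i ≠ j → ContinuousAt (fun q : V → Fin d → ℝ => proj (q j - q i)) p :=
    fun i j hij => ContinuousAt.comp (f := fun q : V → Fin d → ℝ => q j - q i)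
      (continuousAt_proj (sub_ne_zero.mpr (hp.ne hij.symm)))
      ((continuous_apply j).sub (continuous_apply i)).continuousAt
  have hentry : ∀ i j k l, i ≠ j → ContinuousAt (fun q => proj (q j - q i) k l) p :=
    fun i j k l hij => continuousAt_pi.mp (continuousAt_pi.mp (hproj i j hij) k) l
  refine continuousAt_pi.mpr fun x => continuousAt_pi.mpr fun y => ?_
  unfold bearingLaplacian
  split_ifs with hxy hadj
  · simp only [Matrix.sum_apply]
    refine tendsto_finsetSum _ fun j hj => hentry _ _ _ _ ?_
    exact (Finset.mem_filter.mp hj).2.ne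
  · exact (hentry _ _ _ _ hxy).neg
  · exact continuousAt_const

lemma eventually_injOn {X : Type*} [TopologicalSpace X] [T2Space X] {p : V → X} {U : Set V}
    (hU : U.Finite) (hp : U.InjOn p) : ∀ᶠ q in 𝓝 p, U.InjOn q := by
  have hpair : ∀ i ∈ U, ∀ j ∈ U, ∀ᶠ q in 𝓝 p, q i = q j → i = j := fun i hi j hj => by
    obtain rfl | hij := eq_or_ne i j
    · exact .of_forall fun _ _ => rfl
    · have hcont : ∀ k, ContinuousAt (fun q : V → X => q k) p :=
        fun k => (continuous_apply k).continuousAt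
      have hne := ((hcont i).ne_iff_eventually_ne (hcont j)).mp (hp.ne hi hj hij)
      exact hne.mono fun _ hq heq => absurd heq hq
  filter_upwards [hU.eventually_all.mpr fun i hi => hU.eventually_all.mpr (hpair i hi)]
    with q hq i hi j hj using hq i hi j hj

lemma IsBearingRigidOn.eventually_univ [Finite V] [Nontrivial V] (hp : Function.Injective p)
    (hrigid : IsBearingRigidOn G Set.univ p) : ∀ᶠ q in 𝓝 p, IsBearingRigidOn G Set.univ q := by
  have := Fintype.ofFinite V
  have hopen := isOpen_setOfPred_le_matrixRank (m := V × Fin d) (n := V × Fin d)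
    (d * Fintype.card V - (d + 1))
  have hrank := tsub_le_iff_right.mpr ((isBearingRigidOn_univ_iff_le_rank hp).mp hrigid)
  filter_upwards [eventually_injOn Set.finite_univ hp.injOn,
    (continuousAt_bearingLaplacian hp).eventually (hopen.mem_nhds hrank)] with q hq hqrank
  exact (isBearingRigidOn_univ_iff_le_rank (Set.injOn_univ.mp hq)).mpr
    (tsub_le_iff_right.mp hqrank)

theorem IsBearingRigidOn.eventually {U : Set V} (hU : U.Finite) (hU' : U.Nontrivial)
    (hp : U.InjOn p) (hrigid : IsBearingRigidOn G U p) : ∀ᶠ q in 𝓝 p, IsBearingRigidOn G U q := by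
  have := hU.to_subtype
  have := hU'.coe_sort
  have hcont : Continuous fun q : V → Fin d → ℝ => U.domRestrict q :=
    continuous_pi fun i => continuous_apply i.1
  have hev := (isBearingRigidOn_univ_induce_iff.mpr hrigid).eventually_univ
    (Set.injOn_iff_injective.mp hp)
  filter_upwards [hcont.continuousAt.eventually hev] with q hq
  exact isBearingRigidOn_univ_induce_iff.mp hq

end Openness

section Extension

variable {V M : Type*} [AddCommGroup M] [Module ℝ M] {G : SimpleGraph V} {W : Set V}
  {p : V → M} {a b v : V} {x y z : M}

lemma exists_lineMap_notMem_linearIndependent (hind : LinearIndependent ℝ ![y - x, z - x])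
    {s : Set M} (hs : s.Finite) (hx : x ∈ s) :
    ∃ t : ℝ, AffineMap.lineMap x y t ∉ s ∧
      LinearIndependent ℝ ![AffineMap.lineMap x y t - x, AffineMap.lineMap x y t - z] := by
  have hxy : x ≠ y := (sub_ne_zero.mp (hind.ne_zero 0)).symm
  obtain ⟨_, ⟨t, rfl⟩, ht⟩ :=
    (Set.infinite_range_of_injective (AffineMap.lineMap_injective ℝ hxy)).exists_notMem_finite hs
  refine ⟨t, ht, ?_⟩
  have ht0 : t ≠ 0 := by
    rintro rfl
    exact ht (by rwa [AffineMap.lineMap_apply_zero])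
  have hx' : AffineMap.lineMap x y t - x = t • (y - x) := by
    rw [AffineMap.lineMap_apply_module', add_sub_cancel_right]
  have hz' : AffineMap.lineMap x y t - z = t • (y - x) - (z - x) := by
    rw [← hx', sub_sub_sub_cancel_right]
  rw [hx', hz']
  simpa only [zero_smul, add_zero, neg_one_smul, ← sub_eq_add_neg] using
    (LinearIndependent.pair_add_smul_add_smul_iff t 0 t (-1)).mpr
      ⟨hind, by simpa only [mul_neg_one, zero_mul, neg_ne_zero] using ht0⟩

lemma eqOn_update_of_notMem {X : Type*} [DecidableEq V] {p : V → X} {y : X} (hv : v ∉ W) :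
    W.EqOn p (Function.update p v y) :=
  fun _ hi => (Function.update_of_ne (ne_of_mem_of_not_mem hi hv) _ _).symm

lemma IsBearingRigidOn.insert_vertex_update [DecidableEq V] (hW : IsBearingRigidOn G W p)
    (hv : v ∉ W) (ha : a ∈ W) (hb : b ∈ W) (hva : G.Adj v a) (hvb : G.Adj v b)
    (hind : LinearIndependent ℝ ![y - p a, y - p b]) :
    IsBearingRigidOn G (insert v W) (Function.update p v y) := by
  have heq := eqOn_update_of_notMem (p := p) (y := y) hv
  refine (hW.congr heq).insert_vertex ha hb hva hvb ?_
  rwa [Function.update_self, ← heq ha, ← heq hb]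

lemma injOn_insert_update {X : Type*} [DecidableEq V] {p : V → X} {y : X} (hp : W.InjOn p)
    (hv : v ∉ W) (hy : y ∉ p '' W) : (insert v W).InjOn (Function.update p v y) := by
  have heq := eqOn_update_of_notMem (p := p) (y := y) hv
  rw [Set.injOn_insert hv, ← heq.injOn_iff, ← heq.image_eq, Function.update_self]
  exact ⟨hp, hy⟩

end Extension

section Generic

variable {V : Type*} {d : ℕ} {G : SimpleGraph V} {U : Set V} {p : V → Fin d → ℝ} {a b c v : V}

lemma IsBearingRigidOn.exists_linearIndependent (hd : 2 ≤ d) (hU : U.Finite) (hp : U.InjOn p)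
    (hrigid : IsBearingRigidOn G U p) (ha : a ∈ U) (hb : b ∈ U) (hab : a ≠ b) (hac : a ≠ c)
    (hbc : b ≠ c) : ∃ q : V → Fin d → ℝ, U.InjOn q ∧ IsBearingRigidOn G U q ∧
      LinearIndependent ℝ ![q b - q a, q c - q a] := by
  classical
  by_cases hind : LinearIndependent ℝ ![p b - p a, p c - p a]
  · exact ⟨p, hp, hrigid, hind⟩
  have hba : p b - p a ≠ 0 := sub_ne_zero.mpr (hp.ne hb ha hab.symm)
  obtain ⟨r, hr⟩ : ∃ r : ℝ, r • (p b - p a) = p c - p a := by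
    simpa only [LinearIndependent.pair_iff' hba, not_forall, not_not] using hind
  obtain ⟨e, he⟩ := exists_linearIndependent_pair_of_one_lt_finrank
    (by rwa [Module.finrank_fin_fun]) hba
  let q : ℝ → V → Fin d → ℝ := fun t => Function.update p c (p c + t • e)
  have hq0 : q 0 = p := by simp only [q, zero_smul, add_zero, Function.update_eq_self]
  have hq : Filter.Tendsto q (𝓝[≠] 0) (𝓝 p) := by
    rw [← hq0]
    have hcont : Continuous q := by fun_prop
    exact hcont.continuousAt.continuousWithinAt
  obtain ⟨t, ⟨htinj, htrigid⟩, ht0⟩ := (((hq.eventually (eventually_injOn hU hp)).and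
    (hq.eventually (hrigid.eventually hU ⟨a, ha, b, hb, hab⟩ hp))).and
    self_mem_nhdsWithin).exists
  refine ⟨q t, htinj, htrigid, ?_⟩
  have hqa : q t a = p a := Function.update_of_ne hac _ _
  have hqb : q t b = p b := Function.update_of_ne hbc _ _
  have hqc : q t c - p a = r • (p b - p a) + t • e := by
    rw [hr, ← add_sub_right_comm]
    exact congrArg (· - p a) (Function.update_self _ _ _)
  rw [hqa, hqb, hqc, LinearIndependent.pair_add_smul_right_iff]
  simpa only [one_smul] using
    (LinearIndependent.pair_smul_smul_iff isUnit_one (IsUnit.mk0 t ht0)).mpr he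

/-- Some framework in `ℝ^d` with distinct vertices is infinitesimally bearing rigid on `U`. -/
def IsGenericallyBearingRigidOn (d : ℕ) (G : SimpleGraph V) (U : Set V) : Prop :=
  ∃ p : V → Fin d → ℝ, U.InjOn p ∧ IsBearingRigidOn G U p

lemma isGenericallyBearingRigidOn_pair (hd : d ≠ 0) (hab : G.Adj a b) :
    IsGenericallyBearingRigidOn d G {a, b} := by
  classical
  have : NeZero d := ⟨hd⟩
  refine ⟨Pi.single a 1, ?_, isBearingRigidOn_pair hab⟩
  rw [Set.injOn_pair, Pi.single_eq_same, Pi.single_eq_of_ne hab.ne']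
  exact fun h => absurd h one_ne_zero

lemma IsGenericallyBearingRigidOn.insert_vertex (hd : 2 ≤ d) (hU : U.Finite)
    (hrigid : IsGenericallyBearingRigidOn d G U) (hv : v ∉ U) (ha : a ∈ U) (hb : b ∈ U)
    (hab : a ≠ b) (hva : G.Adj v a) (hvb : G.Adj v b) :
    IsGenericallyBearingRigidOn d G (insert v U) := by
  classical
  obtain ⟨p, hp, hrigid⟩ := hrigid
  obtain ⟨e, he⟩ := exists_linearIndependent_pair_of_one_lt_finrank
    (by rwa [Module.finrank_fin_fun]) (sub_ne_zero.mpr (hp.ne hb ha hab.symm))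
  have hind : LinearIndependent ℝ ![p a + e - p a, p b - p a] := by
    rw [add_sub_cancel_left]
    exact LinearIndependent.pair_symm_iff.mp he
  obtain ⟨t, htp, ht⟩ := exists_lineMap_notMem_linearIndependent hind (hU.image p)
    (Set.mem_image_of_mem p ha)
  exact ⟨_, injOn_insert_update hp hv htp, hrigid.insert_vertex_update hv ha hb hva hvb ht⟩

lemma IsGenericallyBearingRigidOn.insert_of_sup_edge (hd : 2 ≤ d) (hU : U.Finite)
    (hrigid : IsGenericallyBearingRigidOn d (G ⊔ SimpleGraph.edge a b) U) (hv : v ∉ U)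
    (ha : a ∈ U) (hb : b ∈ U) (hc : c ∈ U) (hab : a ≠ b) (hac : a ≠ c) (hbc : b ≠ c)
    (hva : G.Adj v a) (hvb : G.Adj v b) (hvc : G.Adj v c) :
    IsGenericallyBearingRigidOn d G (insert v U) := by
  classical
  obtain ⟨p, hp, hrigid⟩ := hrigid
  obtain ⟨q, hq, hqrigid, hind⟩ := hrigid.exists_linearIndependent hd hU hp ha hb hab hac hbc
  obtain ⟨t, htq, ht⟩ := exists_lineMap_notMem_linearIndependent hind (hU.image q)
    (Set.mem_image_of_mem q ha)
  refine ⟨_, injOn_insert_update hq hv htq, IsBearingRigidOn.of_sup_edge (t := t)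
    (hqrigid.insert_vertex_update hv ha hc (.inl hva) (.inl hvc) ht) (.inl rfl) hva hvb ?_⟩
  rw [Function.update_self, Function.update_of_ne (ne_of_mem_of_not_mem ha hv),
    Function.update_of_ne (ne_of_mem_of_not_mem hb hv)]

theorem IsHenneberg.isGenericallyBearingRigidOn [DecidableEq V] {W : Finset V} (hd : 2 ≤ d)
    (hW : IsHenneberg G W) : IsGenericallyBearingRigidOn d G W := by
  induction hW with
  | pair hab =>
    rw [Finset.coe_pair]
    exact isGenericallyBearingRigidOn_pair (by omega) hab
  | typeI hv ha hb hab hva hvb _ ih =>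
    rw [Finset.coe_insert]
    exact ih.insert_vertex hd (Finset.finite_toSet _) hv ha hb hab hva hvb
  | typeII hv ha hb hc hab hac hbc hva hvb hvc _ ih =>
    rw [Finset.coe_insert]
    exact ih.insert_of_sup_edge hd (Finset.finite_toSet _) hv ha hb hc hab hac hbc hva hvb hvc

end Generic

end BearingRigidity

theorem stmt17_general {V : Type*} [Fintype V] (G : SimpleGraph V)
    (h : ∃ H ≤ G, BearingRigidity.IsLamanOn H Finset.univ) (d : ℕ) (hd : 2 ≤ d) :
    ∃ p : V → Fin d → ℝ, Function.Injective p ∧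
      (bearingLaplacian G p).rank = d * Fintype.card V - d - 1 := by
  classical
  obtain ⟨H, hHG, hH⟩ := h
  obtain hV | hV := subsingleton_or_nontrivial V
  · refine ⟨0, Function.injective_of_subsingleton _, ?_⟩
    have hcard := Nat.mul_le_mul_left d (Fintype.card_le_one_iff_subsingleton.mpr hV)
    rw [BearingRigidity.rank_bearingLaplacian_of_subsingleton]
    omega
  · obtain ⟨p, hp, hrigid⟩ :=
      (hH.isHenneberg Fintype.one_lt_card).isGenericallyBearingRigidOn hd
    rw [Finset.coe_univ] at hp hrigid
    rw [Set.injOn_univ] at hp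
    have hle := BearingRigidity.rank_bearingLaplacian_le (G := G) hp
    have hge := (BearingRigidity.isBearingRigidOn_univ_iff_le_rank hp).mp (hrigid.mono hHG)
    exact ⟨p, hp, by omega⟩

theorem stmt17 {n : ℕ} (G : SimpleGraph (Fin n))
    (h : ∃ H : SimpleGraph (Fin n), H ≤ G ∧ IsLaman H)
    (d : ℕ) (hd : 2 ≤ d) :
    ∃ p : Fin n → Fin d → ℝ, Function.Injective p ∧
      (bearingLaplacian G p).rank = d * n - d - 1 := by
  obtain ⟨H, hHG, hH⟩ := h
  simpa only [Fintype.card_fin] using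
    stmt17_general G ⟨H, hHG, BearingRigidity.isLamanOn_univ_of_isLaman hH⟩ d hd
end

section
/- A graph G on n vertices is generically bearing rigid in R^2 if and only if G contains a Laman spanning subgraph. In particular, a generically bearing rigid graph in R^2 has at least 2n - 3 edges. -/
open Matrix

/-!
In the plane, `proj x` is the orthogonal projection onto the line spanned by `x` turned by a right
angle. The bearing Laplacian is therefore `∑ e, ‖e‖⁻² • r e (r e)ᵀ`, where `r e` is the row of the
rigidity matrix at the edge `e` with all its entries turned by a right angle, and its rank is the
rank of the rigidity matrix.

A row of the rigidity matrix is a pair of opposite forces along an edge, so its resultant force and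
moment vanish. Loads supported on `k` points, two of them distinct, realise all three components of
force and moment, hence at most `2 * k - 3` independent rows are supported there, and independent
edge sets are sparse in Laman's sense. Conversely a sparse edge set has a vertex `v` of degree at
most three. In degree three, a counting argument with tight sets finds neighbours `a`, `b` of `v`
such that deleting `v` and inserting the edge `ab` leaves a sparse edge set. Independent rows for
the smaller edge set then extend to the given one, by placing `v` generically if its degree is at
most two, and at the midpoint of `a` and `b` otherwise. Moving to a nearby configuration in general
position keeps the rows independent and makes the points distinct.
-/

section

open Finset

section StarEdges

variable {V : Type*}

/-- The edges joining `v` to the vertices in `S`. -/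
def starEdges (v : V) (S : Finset V) : Finset (Sym2 V) :=
  S.map (Sym2.mkEmbedding v)

lemma coe_starEdges (v : V) (S : Finset V) :
    (starEdges v S : Set (Sym2 V)) = (fun j => s(v, j)) '' S :=
  coe_map _ _

lemma mk_mem_starEdges {v w : V} {S : Finset V} : s(v, w) ∈ starEdges v S ↔ w ∈ S :=
  mem_map' (Sym2.mkEmbedding v)

lemma mem_of_mem_starEdges {v : V} {S : Finset V} {e : Sym2 V} (he : e ∈ starEdges v S) :
    v ∈ e := by
  obtain ⟨j, -, rfl⟩ := mem_map.1 he
  exact Sym2.mem_mk_left v j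

lemma exists_eq_starEdges {E : Finset (Sym2 V)} {v : V} (h : ∀ e ∈ E, v ∈ e) :
    ∃ S, E = starEdges v S := by
  refine ⟨E.preimage (Sym2.mkEmbedding v) (Sym2.mkEmbedding v).injective.injOn, ?_⟩
  ext e
  refine ⟨fun he => ?_, fun he => ?_⟩
  · obtain ⟨j, rfl⟩ := h e he
    exact mk_mem_starEdges.2 (mem_preimage.2 he)
  · obtain ⟨j, hj, rfl⟩ := mem_map.1 he
    exact mem_preimage.1 hj

lemma disjoint_starEdges {F : Finset (Sym2 V)} {v : V} {S : Finset V} (hFv : ∀ e ∈ F, v ∉ e) :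
    Disjoint F (starEdges v S) :=
  disjoint_left.2 fun e he he' => hFv e he (mem_of_mem_starEdges he')

lemma starEdges_insert [DecidableEq V] (v a : V) (S : Finset V) :
    starEdges v (insert a S) = insert s(v, a) (starEdges v S) :=
  map_insert _ _ _

lemma card_union_starEdges [DecidableEq V] {F : Finset (Sym2 V)} {v : V} {S : Finset V}
    (hFv : ∀ e ∈ F, v ∉ e) : #(F ∪ starEdges v S) = #F + #S := by
  rw [card_union_of_disjoint (disjoint_starEdges hFv), starEdges, card_map]

end StarEdges

section RigidityRow

variable {V K M N : Type*} [DecidableEq V]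

/-- The row of the rigidity matrix of the framework `p` at the edge `s(i, j)`: the load on the
vertices consisting of `p i - p j` at `i` and `p j - p i` at `j`. -/
def rigidityRow [AddCommGroup M] (p : V → M) : Sym2 V → V → M :=
  Sym2.lift ⟨fun i j => Pi.single i (p i - p j) + Pi.single j (p j - p i),
    fun _ _ => add_comm _ _⟩

section AddCommGroup

variable [AddCommGroup M] [AddCommGroup N]

lemma rigidityRow_mk (p : V → M) (i j : V) :
    rigidityRow p s(i, j) = Pi.single i (p i - p j) + Pi.single j (p j - p i) :=
  rfl

lemma rigidityRow_mk_apply_left (p : V → M) (i j : V) :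
    rigidityRow p s(i, j) i = p i - p j := by
  obtain rfl | hij := eq_or_ne i j <;> simp [rigidityRow_mk, *]

lemma rigidityRow_apply_of_notMem (p : V → M) {e : Sym2 V} {v : V} (hv : v ∉ e) :
    rigidityRow p e v = 0 := by
  induction e with
  | _ i j =>
    obtain ⟨hi, hj⟩ : v ≠ i ∧ v ≠ j := by simpa using hv
    simp [rigidityRow_mk, hi, hj]

lemma rigidityRow_congr {p q : V → M} {e : Sym2 V} (h : ∀ v ∈ e, p v = q v) :
    rigidityRow p e = rigidityRow q e := by
  induction e with
  | _ i j => rw [rigidityRow_mk, rigidityRow_mk, h i (by simp), h j (by simp)]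

lemma continuous_rigidityRow [TopologicalSpace M] [IsTopologicalAddGroup M] (e : Sym2 V) :
    Continuous fun p : V → M => rigidityRow p e := by
  induction e with
  | _ i j =>
    exact ((continuous_single i).comp (by fun_prop)).add ((continuous_single j).comp (by fun_prop))

lemma rigidityRow_comp {F : Type*} [FunLike F M N] [AddMonoidHomClass F M N] (f : F) (p : V → M)
    (e : Sym2 V) : rigidityRow (f ∘ p) e = f ∘ rigidityRow p e := by
  induction e with
  | _ i j =>
    ext v
    simp only [rigidityRow_mk, Function.comp_apply, ← map_sub, Pi.add_apply, map_add,
      Pi.apply_single (fun _ => f) (fun _ => map_zero f)]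

lemma rigidityRow_mk_eq_of_sub_eq {p : V → M} {v a b : V} (h : p v - p a = p b - p v) :
    rigidityRow p s(a, b) = 2 • rigidityRow p s(v, a) + 2 • rigidityRow p s(v, b) := by
  have hab : p b - p a = 2 • (p b - p v) := by
    rw [two_nsmul]; nth_rw 2 [← h]; abel
  simp only [rigidityRow_mk, ← neg_sub (p b) (p a), ← neg_sub (p v) (p a), ← neg_sub (p b) (p v),
    hab, h, Pi.single_neg, smul_add, smul_neg, Pi.single_smul]
  abel

end AddCommGroup

section Extension

variable [Field K] [AddCommGroup M] [Module K M] {p : V → M} {F : Finset (Sym2 V)} {v : V}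

lemma linearIndepOn_rigidityRow_union_starEdges {S : Finset V}
    (hFv : ∀ e ∈ F, v ∉ e) (hF : LinearIndepOn K (rigidityRow p) (F : Set (Sym2 V)))
    (hS : LinearIndepOn K (fun j => p v - p j) (S : Set V)) :
    LinearIndepOn K (rigidityRow p) (↑(F ∪ starEdges v S) : Set (Sym2 V)) := by
  have hker : Submodule.span K (rigidityRow p '' F) ≤
      LinearMap.ker (LinearMap.proj v : (V → M) →ₗ[K] M) := by
    rw [Submodule.span_le, Set.image_subset_iff]
    exact fun e he => rigidityRow_apply_of_notMem p (hFv e he)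
  rw [coe_union, coe_starEdges]
  refine hF.union_of_quotient (LinearIndepOn.of_comp (Submodule.liftQ _ _ hker) ?_)
  refine LinearIndepOn.image_of_comp _ _ (hS.congr fun j _ => ?_)
  simp [rigidityRow_mk_apply_left]

/- With `v` at the midpoint of `a` and `b`, the row of `s(a, b)` is twice the sum of the rows of
`s(v, a)` and `s(v, b)`, so `s(v, a)` can be exchanged for `s(a, b)`. -/
lemma linearIndepOn_rigidityRow_union_starEdges_insert {S : Finset V} {a b : V}
    (hv : p v - p a = p b - p v) (hab : s(a, b) ∉ F) (hFv : ∀ e ∈ insert s(a, b) F, v ∉ e)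
    (hF : LinearIndepOn K (rigidityRow p) (↑(insert s(a, b) F) : Set (Sym2 V))) (hb : b ∈ S)
    (hS : LinearIndepOn K (fun j => p v - p j) (S : Set V)) :
    LinearIndepOn K (rigidityRow p) (↑(F ∪ starEdges v (insert a S)) : Set (Sym2 V)) := by
  have hab' : s(a, b) ∉ F ∪ starEdges v S := by
    rw [mem_union, not_or]
    exact ⟨hab, fun h => hFv _ (mem_insert_self _ _) (mem_of_mem_starEdges h)⟩
  have hindep := linearIndepOn_rigidityRow_union_starEdges hFv hF hS
  rw [insert_union, coe_insert, linearIndepOn_insert (by exact_mod_cast hab')]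
    at hindep
  rw [starEdges_insert, union_insert, coe_insert]
  refine hindep.1.insert fun hva => hindep.2 ?_
  have hvb : rigidityRow p s(v, b) ∈
      Submodule.span K (rigidityRow p '' ↑(F ∪ starEdges v S)) :=
    Submodule.subset_span (Set.mem_image_of_mem _
      (mem_union_right _ (mk_mem_starEdges.2 hb)))
  rw [rigidityRow_mk_eq_of_sub_eq hv]
  exact add_mem (nsmul_mem hva 2) (nsmul_mem hvb 2)

end Extension

end RigidityRow

section LinearAlgebra

lemma linearIndepOn_sub_smul {ι K M : Type*} [Field K] [AddCommGroup M]
    [Module K M] {g : ι → M} {S : Finset ι} {b : ι} {t : K}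
    (hg : LinearIndepOn K g (S : Set ι)) (hb : b ∈ S) (ht : t ≠ 1) :
    LinearIndepOn K (fun j => g j - t • g b) (S : Set ι) := by
  classical
  rw [linearIndepOn_finset_iff] at hg ⊢
  intro c hc
  set C : K := ∑ j ∈ S, c j with hC
  have hcoeff : ∀ j ∈ S, c j - (if j = b then t * C else 0) = 0 := by
    refine hg _ ?_
    simp only [sub_smul, ite_smul, zero_smul, sum_sub_distrib, sum_ite_eq', hb,
      if_true]
    simpa only [smul_sub, sum_sub_distrib, smul_smul, ← sum_smul, ← sum_mul,
      ← hC, mul_comm C t] using hc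
  have hsum : C - t * C = 0 := by
    simpa only [sum_sub_distrib, sum_ite_eq', hb, if_true, ← hC]
      using sum_eq_zero hcoeff
  have hC0 : C = 0 := by
    have : (1 - t) * C = 0 := by linear_combination hsum
    exact (mul_eq_zero.1 this).resolve_left (sub_ne_zero.2 ht.symm)
  exact fun j hj => by simpa [hC0] using hcoeff j hj

end LinearAlgebra

section GeneralPosition

open Module Topology ContDiff

variable {V E : Type*} [NormedAddCommGroup E] [NormedSpace ℝ E]

lemma dense_setOf_ne_zero_of_analyticOnNhd {f : E → ℝ} (hf : AnalyticOnNhd ℝ f Set.univ)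
    {x₀ : E} (hx₀ : f x₀ ≠ 0) : Dense {x | f x ≠ 0} := by
  rw [← Set.compl_ofPred, ← interior_eq_empty_iff_dense_compl, Set.eq_empty_iff_forall_notMem]
  intro x hx
  exact hx₀ (hf.eqOn_zero_of_preconnected_of_eventuallyEq_zero isPreconnected_univ
    (Set.mem_univ x) (mem_interior_iff_mem_nhds.1 hx) (Set.mem_univ x₀))

lemma isOpen_setOf_linearIndepOn {ι X : Type*} [TopologicalSpace X] {g : X → ι → E}
    (S : Set ι) [Finite S] (hg : ∀ i, Continuous fun x => g x i) :
    IsOpen {x | LinearIndepOn ℝ (g x) S} :=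
  isOpen_setOfPred_linearIndependent.preimage (continuous_pi fun i : S => hg i)

variable [FiniteDimensional ℝ E]

lemma dense_setOf_linearIndependent {ι : Type*} [Fintype ι] (h : Fintype.card ι ≤ finrank ℝ E) :
    Dense {w : ι → E | LinearIndependent ℝ w} := by
  classical
  obtain ⟨w₀, hw₀⟩ : ∃ w : ι → E, LinearIndependent ℝ w := by
    obtain ⟨w, hw⟩ := exists_linearIndependent_of_le_finrank h
    exact ⟨w ∘ Fintype.equivFin ι, hw.comp _ (Fintype.equivFin ι).injective⟩
  obtain ⟨A, hA⟩ : ∃ A : E →ₗ[ℝ] ι → ℝ, ∀ i, A (w₀ i) = Pi.single i 1 := by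
    obtain ⟨A, hA⟩ := (Fintype.linearCombination ℝ w₀).exists_leftInverse_of_injective
      (LinearMap.ker_eq_bot.2 hw₀.fintypeLinearCombination_injective)
    refine ⟨A, fun i => ?_⟩
    simpa using LinearMap.congr_fun hA (Pi.single i 1)
  let f : (ι → E) → ℝ := fun w => (Matrix.of fun i => A (w i)).det
  have hf : AnalyticOnNhd ℝ f Set.univ := by
    have hA_smooth : ContDiff ℝ ω A := A.toContinuousLinearMap.contDiff
    refine ContDiff.analyticOnNhd ?_
    simp only [f, Matrix.det_apply', Matrix.of_apply]
    fun_prop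
  have hf₀ : f w₀ ≠ 0 := by
    have : (Matrix.of fun i => A (w₀ i)) = 1 := by
      ext i j
      simp [hA, Matrix.one_apply, Pi.single_apply, eq_comm]
    simp [f, this]
  refine (dense_setOf_ne_zero_of_analyticOnNhd hf hf₀).mono fun w hw => ?_
  exact LinearIndependent.of_comp A (Matrix.linearIndependent_rows_of_det_ne_zero hw)

/-- A configuration is in general position if, seen from any of its points, any `finrank ℝ E`
of the other points lie in linearly independent directions. In the plane: the points are distinct
and no three of them are collinear. -/
def InGeneralPosition (p : V → E) : Prop :=
  ∀ v (S : Finset V), v ∉ S → #S ≤ finrank ℝ E →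
    LinearIndepOn ℝ (fun j => p v - p j) (S : Set V)

lemma InGeneralPosition.injective [Nontrivial E] {p : V → E} (hp : InGeneralPosition p) :
    Function.Injective p := by
  intro i j hij
  by_contra hne
  have h := hp i {j} (by simpa using hne) (by simpa using Nat.one_le_iff_ne_zero.2 finrank_pos.ne')
  exact h.ne_zero (mem_coe.2 (mem_singleton_self j)) (sub_eq_zero.2 hij)

lemma dense_setOf_linearIndepOn_sub [Finite V] {v : V} {S : Finset V} (hv : v ∉ S)
    (hS : #S ≤ finrank ℝ E) :
    Dense {p : V → E | LinearIndepOn ℝ (fun j => p v - p j) (S : Set V)} := by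
  classical
  let L : (V → E) →ₗ[ℝ] S → E :=
    LinearMap.pi fun j => (LinearMap.proj v : (V → E) →ₗ[ℝ] E) - LinearMap.proj (j : V)
  have hL : Function.Surjective L := fun w => by
    refine ⟨fun j => if h : j ∈ S then -w ⟨j, h⟩ else 0, funext fun j => ?_⟩
    simp [L, hv]
  exact (dense_setOf_linearIndependent (by simpa using hS)).preimage
    (LinearMap.isOpenMap_of_finiteDimensional L hL)

lemma dense_setOf_inGeneralPosition [Finite V] : Dense {p : V → E | InGeneralPosition p} := by
  have hopen (x : {x : V × Finset V // x.1 ∉ x.2 ∧ #x.2 ≤ finrank ℝ E}) :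
      IsOpen {p : V → E | LinearIndepOn ℝ (fun j => p x.1.1 - p j) (x.1.2 : Set V)} :=
    isOpen_setOf_linearIndepOn _ (by fun_prop)
  refine (dense_iInter_of_isOpen hopen
    fun x => dense_setOf_linearIndepOn_sub x.2.1 x.2.2).mono fun p hp v S hv hS => ?_
  exact Set.mem_iInter.1 hp ⟨(v, S), hv, hS⟩

lemma exists_inGeneralPosition_of_linearIndepOn_rigidityRow [Finite V] [DecidableEq V]
    {p : V → E} {F : Finset (Sym2 V)}
    (hp : LinearIndepOn ℝ (rigidityRow p) (F : Set (Sym2 V))) :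
    ∃ q : V → E, InGeneralPosition q ∧
      LinearIndepOn ℝ (rigidityRow q) (F : Set (Sym2 V)) := by
  have := Fintype.ofFinite V
  have hopen : IsOpen {q : V → E | LinearIndepOn ℝ (rigidityRow q) (F : Set (Sym2 V))} :=
    isOpen_setOf_linearIndepOn _ continuous_rigidityRow
  obtain ⟨q, hqF, hq⟩ := dense_setOf_inGeneralPosition.inter_open_nonempty _ hopen ⟨p, hp⟩
  exact ⟨q, hq, hqF⟩

end GeneralPosition

section Henneberg

open Module

variable {V E : Type*} [Finite V] [DecidableEq V] [NormedAddCommGroup E] [NormedSpace ℝ E]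
  [FiniteDimensional ℝ E] {F : Finset (Sym2 V)} {v : V} {S : Finset V}

variable (E) in
/-- The edge set `F` is independent in the generic rigidity matroid of `E`: its rigidity matrix
has linearly independent rows at some configuration of the vertices in `E`. -/
def IsRigidityIndependent {V : Type*} [DecidableEq V] (F : Finset (Sym2 V)) : Prop :=
  ∃ p : V → E, LinearIndepOn ℝ (rigidityRow p) (F : Set (Sym2 V))

lemma IsRigidityIndependent.union_starEdges (hF : IsRigidityIndependent E F)
    (hFv : ∀ e ∈ F, v ∉ e) (hvS : v ∉ S) (hS : #S ≤ finrank ℝ E) :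
    IsRigidityIndependent E (F ∪ starEdges v S) := by
  obtain ⟨p, hp⟩ := hF
  obtain ⟨q, hq, hqF⟩ := exists_inGeneralPosition_of_linearIndepOn_rigidityRow hp
  exact ⟨q, linearIndepOn_rigidityRow_union_starEdges hFv hqF (hq v S hvS hS)⟩

lemma IsRigidityIndependent.union_starEdges_insert {a b : V}
    (hF : IsRigidityIndependent E (insert s(a, b) F)) (hab : s(a, b) ∉ F)
    (hFv : ∀ e ∈ insert s(a, b) F, v ∉ e) (hbS : b ∈ S) (haS : a ∉ S) (hvS : v ∉ S)
    (hS : #S ≤ finrank ℝ E) :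
    IsRigidityIndependent E (F ∪ starEdges v (insert a S)) := by
  obtain ⟨p, hp⟩ := hF
  obtain ⟨q, hq, hqF⟩ := exists_inGeneralPosition_of_linearIndepOn_rigidityRow hp
  obtain ⟨hva, hvb⟩ : v ≠ a ∧ v ≠ b := by simpa using hFv _ (mem_insert_self _ _)
  set r : V → E := Function.update q v (midpoint ℝ (q a) (q b))
  have hr_ne {j : V} (hj : v ≠ j) : r j = q j := Function.update_of_ne hj.symm _ _
  have hrv : r v = midpoint ℝ (q a) (q b) := Function.update_self _ _ _
  have hrF : LinearIndepOn ℝ (rigidityRow r) (↑(insert s(a, b) F) : Set (Sym2 V)) :=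
    hqF.congr fun e he =>
      rigidityRow_congr fun w hw => (hr_ne fun h => hFv e he (h ▸ hw)).symm
  have hrS : LinearIndepOn ℝ (fun j => r v - r j) (S : Set V) := by
    refine (linearIndepOn_sub_smul (hq a S haS hS) hbS (t := 2⁻¹) (by norm_num)).congr
      fun j hj => ?_
    rw [hrv, hr_ne (ne_of_mem_of_not_mem hj hvS).symm, midpoint_eq_smul_add, invOf_eq_inv]
    module
  refine ⟨r, linearIndepOn_rigidityRow_union_starEdges_insert ?_ hab hFv hrF hbS hrS⟩
  rw [hrv, hr_ne hva, hr_ne hvb, midpoint_sub_left, right_sub_midpoint]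

end Henneberg

section LamanSparse

variable {V : Type*} [DecidableEq V] {E F : Finset (Sym2 V)} {X Y Z S : Finset V} {v a b c : V}

/-- Laman's sparsity condition on an edge set: any `k` vertices spanning an edge span at most
`2 * k - 3` edges. In particular there are no loops. -/
def IsLamanSparse (E : Finset (Sym2 V)) : Prop :=
  ∀ X : Finset V, (E ∩ X.sym2).Nonempty → #(E ∩ X.sym2) + 3 ≤ 2 * #X

/-- A vertex set is tight if it spans as many edges as Laman's sparsity condition allows. -/
def IsTight (F : Finset (Sym2 V)) (X : Finset V) : Prop :=
  #(F ∩ X.sym2) + 3 = 2 * #X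

lemma IsLamanSparse.mono (hE : IsLamanSparse E) (hFE : F ⊆ E) : IsLamanSparse F := fun X hX =>
  (Nat.add_le_add_right (card_le_card (inter_subset_inter_right hFE)) 3).trans
    (hE X (hX.mono (inter_subset_inter_right hFE)))

lemma IsLamanSparse.card_add_three_le_of_one_lt (hF : IsLamanSparse F) (hX : 1 < #X) :
    #(F ∩ X.sym2) + 3 ≤ 2 * #X := by
  obtain h | h := (F ∩ X.sym2).eq_empty_or_nonempty
  · rw [h, card_empty]; lia
  · exact hF X h

lemma IsLamanSparse.inter_sym2_eq_empty (hF : IsLamanSparse F) (hX : #X ≤ 1) :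
    F ∩ X.sym2 = ∅ := by
  by_contra h
  have := hF X (nonempty_iff_ne_empty.2 h)
  have := card_pos.2 (nonempty_iff_ne_empty.2 h)
  lia

lemma IsLamanSparse.not_isDiag (hE : IsLamanSparse E) {e : Sym2 V} (he : e ∈ E) :
    ¬ e.IsDiag := by
  induction e with
  | _ i j =>
    intro hij
    obtain rfl := Sym2.mk_isDiag_iff.1 hij
    have hmem : s(i, i) ∈ E ∩ ({i} : Finset V).sym2 :=
      mem_inter.2 ⟨he, mk_mem_sym2_iff.2 ⟨mem_singleton_self i, mem_singleton_self i⟩⟩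
    rw [hE.inter_sym2_eq_empty (card_singleton i).le] at hmem
    exact notMem_empty _ hmem

lemma IsLamanSparse.exists_card_filter_mem_le_three (hE : IsLamanSparse E) (hne : E.Nonempty) :
    ∃ v, {e ∈ E | v ∈ e}.Nonempty ∧ #{e ∈ E | v ∈ e} ≤ 3 := by
  by_contra! hdeg
  set X : Finset V := E.biUnion Sym2.toFinset
  have hmem {v : V} {e : Sym2 V} (he : e ∈ E) (hv : v ∈ e) : v ∈ X :=
    mem_biUnion.2 ⟨e, he, Sym2.mem_toFinset.2 hv⟩
  have hEX : E ∩ X.sym2 = E :=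
    inter_eq_left.2 fun e he => mem_sym2_iff.2 fun v hv => hmem he hv
  have hcard : #E + 3 ≤ 2 * #X := by simpa only [hEX] using hE X (hEX.symm ▸ hne)
  have hdouble : #X * 4 ≤ #E * 2 := by
    refine card_mul_le_card_mul (fun v e => v ∈ e) (fun v hv => ?_) fun e he => ?_
    · obtain ⟨e, he, hv⟩ := mem_biUnion.1 hv
      exact hdeg v ⟨e, mem_filter.2 ⟨he, Sym2.mem_toFinset.1 hv⟩⟩
    · rw [← Sym2.card_toFinset_of_not_isDiag e (hE.not_isDiag he)]
      exact card_le_card fun v hv => Sym2.mem_toFinset.2 (mem_filter.1 hv).2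
  lia

lemma IsLamanSparse.exists_eq_union_starEdges (hE : IsLamanSparse E) (hne : E.Nonempty) :
    ∃ v F S, E = F ∪ starEdges v S ∧ (∀ e ∈ F, v ∉ e) ∧ v ∉ S ∧ S.Nonempty ∧ #S ≤ 3 := by
  obtain ⟨v, hv, hv3⟩ := hE.exists_card_filter_mem_le_three hne
  obtain ⟨S, hS⟩ := exists_eq_starEdges (E := {e ∈ E | v ∈ e}) fun e he => (mem_filter.1 he).2
  rw [hS] at hv hv3
  have hEv : E = {e ∈ E | v ∉ e} ∪ starEdges v S := by
    rw [← hS, union_comm, filter_union_filter_not_eq]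
  refine ⟨v, {e ∈ E | v ∉ e}, S, hEv, fun e he => (mem_filter.1 he).2, fun hvS => ?_,
    map_nonempty.1 hv, (card_map _).symm.trans_le hv3⟩
  exact hE.not_isDiag (hEv ▸ mem_union_right _ (mk_mem_starEdges.2 hvS)) (Sym2.mk_isDiag_iff.2 rfl)

lemma card_inter_sym2_add_card_inter_sym2_le (F : Finset (Sym2 V)) (X Y : Finset V) :
    #(F ∩ X.sym2) + #(F ∩ Y.sym2) ≤ #(F ∩ (X ∪ Y).sym2) + #(F ∩ (X ∩ Y).sym2) := by
  rw [← card_union_add_card_inter]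
  refine add_le_add (card_le_card ?_) (card_le_card ?_)
  · exact union_subset (inter_subset_inter_left (sym2_mono subset_union_left))
      (inter_subset_inter_left (sym2_mono subset_union_right))
  · intro e
    simp only [mem_inter, mem_sym2_iff]
    grind

lemma IsTight.nonempty (hX : IsTight F X) : (F ∩ X.sym2).Nonempty := by
  rw [← card_pos]
  unfold IsTight at hX
  lia

lemma IsLamanSparse.isTight_of_le (hF : IsLamanSparse F) (hX : 1 < #X)
    (h : 2 * #X ≤ #(F ∩ X.sym2) + 3) : IsTight F X :=
  (hF.card_add_three_le_of_one_lt hX).antisymm h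

lemma IsTight.notMem (hX : IsTight F X) (hF : IsLamanSparse F) (hFv : ∀ e ∈ F, v ∉ e) :
    v ∉ X := by
  intro hv
  have hFX : F ∩ (X.erase v).sym2 = F ∩ X.sym2 := by
    refine (inter_subset_inter_left (sym2_mono (erase_subset v X))).antisymm fun e he => ?_
    obtain ⟨heF, heX⟩ := mem_inter.1 he
    exact mem_inter.2 ⟨heF, mem_sym2_iff.2 fun w hw =>
      mem_erase.2 ⟨ne_of_mem_of_not_mem hw (hFv e heF), mem_sym2_iff.1 heX w hw⟩⟩
  have hle := hF (X.erase v) (hFX ▸ hX.nonempty)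
  have hlt := card_erase_lt_of_mem hv
  rw [hFX, hX] at hle
  lia

lemma IsLamanSparse.exists_isTight (hF : IsLamanSparse F) (hab : a ≠ b)
    (h : s(a, b) ∈ F ∨ ¬ IsLamanSparse (insert s(a, b) F)) :
    ∃ X, IsTight F X ∧ a ∈ X ∧ b ∈ X := by
  obtain hmem | hins := h
  · have hpos : 0 < #(F ∩ ({a, b} : Finset V).sym2) :=
      card_pos.2 ⟨s(a, b), by simp [hmem]⟩
    have hcard := card_pair hab
    exact ⟨{a, b}, hF.isTight_of_le (by lia) (by lia), by simp, by simp⟩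
  · obtain ⟨X, hne, hlt⟩ : ∃ X : Finset V, (insert s(a, b) F ∩ X.sym2).Nonempty ∧
        2 * #X < #(insert s(a, b) F ∩ X.sym2) + 3 := by
      simpa [IsLamanSparse] using hins
    have habX : s(a, b) ∈ X.sym2 := by
      by_contra hnot
      rw [insert_inter_of_notMem hnot] at hne hlt
      exact hlt.not_ge (hF X hne)
    obtain ⟨ha, hb⟩ := mk_mem_sym2_iff.1 habX
    rw [insert_inter_of_mem habX] at hlt
    have hle := card_insert_le s(a, b) (F ∩ X.sym2)
    exact ⟨X, hF.isTight_of_le (one_lt_card.2 ⟨a, ha, b, hb, hab⟩) (by lia), ha, hb⟩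

lemma IsTight.union (hF : IsLamanSparse F) (hX : IsTight F X) (hY : IsTight F Y)
    (hXY : 1 < #(X ∩ Y)) : IsTight F (X ∪ Y) := by
  have hinter := hF.card_add_three_le_of_one_lt hXY
  have hsuper := card_inter_sym2_add_card_inter_sym2_le F X Y
  have hcard := card_union_add_card_inter X Y
  have hle := card_le_card (inter_subset_union (s := X) (t := Y))
  unfold IsTight at hX hY
  exact hF.isTight_of_le (by lia) (by lia)

lemma IsLamanSparse.disjoint_inter_sym2 (hF : IsLamanSparse F) (hXY : #(X ∩ Y) ≤ 1) :
    Disjoint (F ∩ X.sym2) (F ∩ Y.sym2) := by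
  rw [disjoint_iff_inter_eq_empty, ← hF.inter_sym2_eq_empty hXY]
  ext e
  simp only [mem_inter, mem_sym2_iff]
  grind

lemma IsTight.union_union (hF : IsLamanSparse F) (hX : IsTight F X) (hY : IsTight F Y)
    (hZ : IsTight F Z) (hXY : #(X ∩ Y) ≤ 1) (hXZ : #(X ∩ Z) ≤ 1) (hYZ : #(Y ∩ Z) ≤ 1)
    (ha : a ∈ X ∩ Y) (hb : b ∈ X ∩ Z) (hc : c ∈ Y ∩ Z) (hbc : b ≠ c) :
    IsTight F (X ∪ Y ∪ Z) := by
  have hsub : F ∩ X.sym2 ∪ F ∩ Y.sym2 ∪ F ∩ Z.sym2 ⊆ F ∩ (X ∪ Y ∪ Z).sym2 := by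
    simp only [← inter_union_distrib_left]
    gcongr
    refine union_subset (union_subset ?_ ?_) ?_ <;> apply sym2_mono <;> grind
  have hsum := card_le_card hsub
  rw [card_union_of_disjoint (disjoint_union_left.2
    ⟨hF.disjoint_inter_sym2 hXZ, hF.disjoint_inter_sym2 hYZ⟩),
    card_union_of_disjoint (hF.disjoint_inter_sym2 hXY)] at hsum
  have hcardXY := card_union_add_card_inter X Y
  have hcardXYZ := card_union_add_card_inter (X ∪ Y) Z
  have hXY_pos : 0 < #(X ∩ Y) := card_pos.2 ⟨a, ha⟩
  have hXYZ : 1 < #((X ∪ Y) ∩ Z) := one_lt_card.2 ⟨b, by grind, c, by grind, hbc⟩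
  unfold IsTight at hX hY hZ
  exact hF.isTight_of_le (by have := card_le_card (inter_subset_union (s := X ∪ Y) (t := Z)); lia)
    (by lia)

lemma IsTight.not_subset_of_union_starEdges (hX : IsTight F X)
    (hE : IsLamanSparse (F ∪ starEdges v S)) (hFv : ∀ e ∈ F, v ∉ e) (hS : 3 ≤ #S) : ¬ S ⊆ X := by
  intro hSX
  have hvX : v ∉ X := hX.notMem (hE.mono subset_union_left) hFv
  have hsub : F ∩ X.sym2 ∪ starEdges v S ⊆ (F ∪ starEdges v S) ∩ (insert v X).sym2 := by
    rw [union_inter_distrib_right]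
    gcongr
    · exact sym2_mono (subset_insert v X)
    · refine subset_inter subset_rfl fun e he => ?_
      obtain ⟨j, hj, rfl⟩ := mem_map.1 he
      exact mk_mem_sym2_iff.2 ⟨mem_insert_self v X, mem_insert_of_mem (hSX hj)⟩
  have hle := hE (insert v X) ((hX.nonempty.mono subset_union_left).mono hsub)
  have hcard := card_le_card hsub
  rw [card_union_starEdges fun e he => hFv e (mem_inter.1 he).1] at hcard
  rw [card_insert_of_notMem hvX] at hle
  unfold IsTight at hX
  lia

/- If every pair in `S = {a, b, c}` were blocked by a tight set, then either two of these sets or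
all three together would have a tight union, which contains `S`. -/
lemma IsLamanSparse.exists_insert_isLamanSparse (hE : IsLamanSparse (F ∪ starEdges v S))
    (hFv : ∀ e ∈ F, v ∉ e) (hS : #S = 3) :
    ∃ a ∈ S, ∃ b ∈ S, a ≠ b ∧ s(a, b) ∉ F ∧ IsLamanSparse (insert s(a, b) F) := by
  by_contra! hblocked
  have hF : IsLamanSparse F := hE.mono subset_union_left
  have htight {a b : V} (ha : a ∈ S) (hb : b ∈ S) (hab : a ≠ b) :
      ∃ X, IsTight F X ∧ a ∈ X ∧ b ∈ X :=
    hF.exists_isTight hab (or_iff_not_imp_left.2 (hblocked a ha b hb hab))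
  obtain ⟨a, b, c, hab, hac, hbc, rfl⟩ := card_eq_three.1 hS
  have hnot {X : Finset V} (hX : IsTight F X) (ha : a ∈ X) (hb : b ∈ X) : c ∉ X := fun hc =>
    hX.not_subset_of_union_starEdges hE hFv hS.ge (by simp [insert_subset_iff, *])
  obtain ⟨X, hX, haX, hbX⟩ := htight (by simp) (by simp) hab
  obtain ⟨Y, hY, haY, hcY⟩ := htight (by simp) (by simp) hac
  obtain ⟨Z, hZ, hbZ, hcZ⟩ := htight (by simp) (by simp) hbc
  have hXY : #(X ∩ Y) ≤ 1 := by
    by_contra! h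
    exact hnot (hX.union hF hY h) (by simp [*]) (by simp [*]) (by simp [*])
  have hXZ : #(X ∩ Z) ≤ 1 := by
    by_contra! h
    exact hnot (hX.union hF hZ h) (by simp [*]) (by simp [*]) (by simp [*])
  have hYZ : #(Y ∩ Z) ≤ 1 := by
    by_contra! h
    exact hnot (hY.union hF hZ h) (by simp [*]) (by simp [*]) (by simp [*])
  exact hnot (hX.union_union hF hY hZ hXY hXZ hYZ (mem_inter.2 ⟨haX, haY⟩)
    (mem_inter.2 ⟨hbX, hbZ⟩) (mem_inter.2 ⟨hcY, hcZ⟩) hbc) (by simp [*]) (by simp [*]) (by simp [*])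

open Module in
lemma IsLamanSparse.isRigidityIndependent [Finite V] {M : Type*} [NormedAddCommGroup M]
    [NormedSpace ℝ M] [FiniteDimensional ℝ M] (hM : 2 ≤ finrank ℝ M) (hE : IsLamanSparse E) :
    IsRigidityIndependent M E := by
  induction hn : #E using Nat.strong_induction_on generalizing E with | _ n ih
  obtain rfl | hne := E.eq_empty_or_nonempty
  · exact ⟨0, by simp⟩
  obtain ⟨v, F, S, rfl, hFv, hvS, hS, hS3⟩ := hE.exists_eq_union_starEdges hne
  have hcard : n = #F + #S := hn.symm.trans (card_union_starEdges hFv)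
  have hS_pos : 0 < #S := hS.card_pos
  obtain hS2 | hS3 := hS3.lt_or_eq
  · have hF := ih #F (by lia) (hE.mono subset_union_left) rfl
    exact hF.union_starEdges hFv hvS (by lia)
  obtain ⟨a, ha, b, hb, hab, habF, hins⟩ := hE.exists_insert_isLamanSparse hFv hS3
  have hlt : #(insert s(a, b) F) < n := by
    rw [hcard, card_insert_of_notMem habF]; lia
  have hvab : v ∉ s(a, b) := by grind
  have hFv' : ∀ e ∈ insert s(a, b) F, v ∉ e := (forall_mem_insert _ _ _).2 ⟨hvab, hFv⟩
  rw [← insert_erase ha]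
  exact (ih _ hlt hins rfl).union_starEdges_insert habF hFv'
    (mem_erase.2 ⟨hab.symm, hb⟩) (notMem_erase a S) (fun h => hvS (mem_of_mem_erase h))
    (by rw [card_erase_of_mem ha]; lia)

end LamanSparse

section MaxwellCount

open Module

variable {V K : Type*} [Field K]

/-- Rotation of the plane by a right angle. -/
def perp : (Fin 2 → K) →ₗ[K] Fin 2 → K :=
  Matrix.mulVecLin !![0, -1; 1, 0]

lemma perp_apply (x : Fin 2 → K) : perp x = ![-x 1, x 0] := by
  ext i
  fin_cases i <;> simp [perp, vecHead, vecTail]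

lemma perp_injective : Function.Injective (perp (K := K)) := by
  rw [injective_iff_map_eq_zero]
  intro x hx
  obtain ⟨h₁, h₀⟩ : x 1 = 0 ∧ x 0 = 0 := by
    simpa [perp_apply, funext_iff, Fin.forall_fin_two] using hx
  ext i
  fin_cases i
  exacts [h₀, h₁]

lemma perp_dotProduct_self (x : Fin 2 → K) : perp x ⬝ᵥ x = 0 := by
  simp only [perp_apply, dotProduct, Fin.sum_univ_two, cons_val_zero, cons_val_one]
  ring

/-- The resultant force and the resultant moment about the origin of the load `x` applied to the
framework `p` in the plane. -/
def wrench [Fintype V] (p : V → Fin 2 → K) : (V → Fin 2 → K) →ₗ[K] (Fin 2 → K) × K where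
  toFun x := (∑ v, x v, ∑ v, perp (p v) ⬝ᵥ x v)
  map_add' x y := by simp [sum_add_distrib]
  map_smul' c x := by simp [smul_sum, mul_sum]

variable {p : V → Fin 2 → K} {X : Finset V} {F : Finset (Sym2 V)} {a b : V}

lemma wrench_single [Fintype V] [DecidableEq V] (p : V → Fin 2 → K) (v : V) (f : Fin 2 → K) :
    wrench p (Pi.single v f) = (f, perp (p v) ⬝ᵥ f) := by
  refine Prod.ext (sum_pi_single' v f univ |>.trans <| if_pos <| mem_univ v) ?_
  refine (Fintype.sum_eq_single v fun w hw => ?_).trans ?_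
  · rw [Pi.single_eq_of_ne hw, dotProduct_zero]
  · rw [Pi.single_eq_same]

lemma wrench_rigidityRow [Fintype V] [DecidableEq V] (p : V → Fin 2 → K) (e : Sym2 V) :
    wrench p (rigidityRow p e) = 0 := by
  induction e with
  | _ i j =>
    have hmoment : perp (p i) ⬝ᵥ (p i - p j) + perp (p j) ⬝ᵥ (p j - p i) = 0 := by
      rw [← neg_sub (p i), dotProduct_neg, ← sub_eq_add_neg, ← sub_dotProduct, ← map_sub,
        perp_dotProduct_self]
    rw [rigidityRow_mk, map_add, wrench_single, wrench_single, Prod.mk_add_mk, hmoment,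
      sub_add_sub_cancel, sub_self, Prod.mk_zero_zero]

lemma exists_wrench_single_add_single_eq [Fintype V] [DecidableEq V] (hab : p a ≠ p b)
    (w : (Fin 2 → K) × K) :
    ∃ f g, wrench p (Pi.single a f + Pi.single b g) = w := by
  obtain ⟨u, hu⟩ : ∃ u, perp (p a - p b) ⬝ᵥ u ≠ 0 := by
    by_contra! h
    exact hab (sub_eq_zero.1 (perp_injective
      ((dotProduct_eq_zero _ h).trans (map_zero perp).symm)))
  set c : K := (perp (p a - p b) ⬝ᵥ u)⁻¹ * (w.2 - perp (p b) ⬝ᵥ w.1)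
  have hc : c * (perp (p a - p b) ⬝ᵥ u) = w.2 - perp (p b) ⬝ᵥ w.1 := by
    simp only [c]; field_simp
  refine ⟨c • u, w.1 - c • u, ?_⟩
  rw [map_sub, sub_dotProduct] at hc
  rw [map_add, wrench_single, wrench_single, Prod.mk_add_mk, add_sub_cancel, dotProduct_sub,
    dotProduct_smul, dotProduct_smul, smul_eq_mul, smul_eq_mul]
  exact Prod.ext rfl (by linear_combination hc)

lemma surjective_funLeft_prod_wrench [Fintype V] (ha : a ∈ X) (hb : b ∈ X) (hab : p a ≠ p b) :
    Function.Surjective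
      ((LinearMap.funLeft K (Fin 2 → K) (Subtype.val : {v // v ∉ X} → V)).prod (wrench p)) := by
  classical
  rintro ⟨y, w⟩
  set x : V → Fin 2 → K := fun v => if h : v ∈ X then 0 else y ⟨v, h⟩ with hx
  obtain ⟨f, g, hfg⟩ := exists_wrench_single_add_single_eq hab (w - wrench p x)
  refine ⟨x + (Pi.single a f + Pi.single b g), Prod.ext (funext fun v => ?_) ?_⟩
  · have hva : (v : V) ≠ a := (ne_of_mem_of_not_mem ha v.2).symm
    have hvb : (v : V) ≠ b := (ne_of_mem_of_not_mem hb v.2).symm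
    simp [hx, hva, hvb, v.2]
  · exact (map_add (wrench p) _ _).trans (by rw [hfg, add_sub_cancel])

lemma card_add_three_le_of_subset_sym2 [Finite V] [DecidableEq V] (ha : a ∈ X) (hb : b ∈ X)
    (hab : p a ≠ p b) (hF : LinearIndepOn K (rigidityRow p) (F : Set (Sym2 V))) (hFX : F ⊆ X.sym2) :
    #F + 3 ≤ 2 * #X := by
  have := Fintype.ofFinite V
  set Φ := (LinearMap.funLeft K (Fin 2 → K) (Subtype.val : {v // v ∉ X} → V)).prod (wrench p)
  have hker : Submodule.span K (Set.range fun e : F => rigidityRow p e) ≤ LinearMap.ker Φ := by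
    rw [Submodule.span_le]
    rintro _ ⟨e, rfl⟩
    refine Prod.ext (funext fun v => rigidityRow_apply_of_notMem p fun hv => ?_)
      (wrench_rigidityRow p e)
    exact v.2 (mem_sym2_iff.1 (hFX e.2) _ hv)
  have hspan : finrank K (Submodule.span K (Set.range fun e : F => rigidityRow p e)) = #F := by
    simpa using finrank_span_eq_card hF
  have hle : #F ≤ finrank K (LinearMap.ker Φ) := hspan ▸ Submodule.finrank_mono hker
  have hrank : (Fintype.card V - #X) * 2 + 3 + finrank K (LinearMap.ker Φ) =
      Fintype.card V * 2 := by
    have hΦ := Φ.finrank_range_add_finrank_ker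
    rw [LinearMap.range_eq_top.2 (surjective_funLeft_prod_wrench ha hb hab), finrank_top] at hΦ
    simpa [Fintype.card_subtype_compl, finrank_pi_fintype] using hΦ
  lia

lemma isLamanSparse_of_linearIndepOn_rigidityRow [Finite V] [DecidableEq V]
    (hF : LinearIndepOn K (rigidityRow p) (F : Set (Sym2 V))) : IsLamanSparse F := by
  rintro X ⟨e, he⟩
  induction e with
  | _ a b =>
    obtain ⟨heF, heX⟩ := mem_inter.1 he
    obtain ⟨ha, hb⟩ := mk_mem_sym2_iff.1 heX
    have hab : p a ≠ p b := fun h => hF.ne_zero heF (by simp [rigidityRow_mk, h])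
    exact card_add_three_le_of_subset_sym2 ha hb hab
      (hF.mono (coe_subset.2 inter_subset_left)) inter_subset_right

end MaxwellCount

section BearingLaplacian

open Module

lemma rank_sum_smul_vecMulVec {ι m : Type*} [Fintype m] {s : Finset ι} {w : ι → ℝ}
    (hw : ∀ e ∈ s, 0 < w e) (r : ι → m → ℝ) :
    (∑ e ∈ s, w e • vecMulVec (r e) (r e)).rank = finrank ℝ (Submodule.span ℝ (r '' s)) := by
  set A : Matrix s m ℝ := Matrix.of fun e => √(w e) • r e with hA
  have hAA : ∑ e ∈ s, w e • vecMulVec (r e) (r e) = Aᵀ * A := by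
    ext a b
    simp only [Matrix.sum_apply, Matrix.smul_apply, vecMulVec_apply, Matrix.mul_apply,
      transpose_apply, hA, of_apply, Pi.smul_apply, smul_eq_mul]
    rw [← s.sum_coe_sort]
    refine sum_congr rfl fun e _ => ?_
    rw [mul_mul_mul_comm, Real.mul_self_sqrt (hw e e.2).le]
  have hspan : Submodule.span ℝ (Set.range A.row) = Submodule.span ℝ (r '' s) := by
    refine Submodule.span_eq_span ?_ ?_
    · rintro _ ⟨e, rfl⟩
      exact Submodule.smul_mem _ _ (Submodule.subset_span (Set.mem_image_of_mem r e.2))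
    · rintro _ ⟨e, he, rfl⟩
      have hne : √(w e) ≠ 0 := (Real.sqrt_pos.2 (hw e he)).ne'
      have hmem : √(w e) • r e ∈ Submodule.span ℝ (Set.range A.row) :=
        Submodule.subset_span ⟨⟨e, he⟩, rfl⟩
      exact (Submodule.smul_mem_iff _ hne).1 hmem
  rw [hAA, rank_transpose_mul_self, rank_eq_finrank_span_row, hspan]

lemma vecMulVec_add_vecMulVec_perp {K : Type*} [Field K] (x : Fin 2 → K) :
    vecMulVec x x + vecMulVec (perp x) (perp x) = (x ⬝ᵥ x) • 1 := by
  ext s t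
  fin_cases s <;> fin_cases t <;>
    simp [perp_apply, vecMulVec_apply, dotProduct, Fin.sum_univ_two, mul_comm, add_comm]

lemma proj_eq_smul_vecMulVec_perp {x : Fin 2 → ℝ} (hx : x ≠ 0) :
    proj x = (x ⬝ᵥ x)⁻¹ • vecMulVec (perp x) (perp x) := by
  rw [eq_sub_of_add_eq' (vecMulVec_add_vecMulVec_perp x), smul_sub,
    inv_smul_smul₀ (dotProduct_self_eq_zero.not.2 hx), proj]

variable {V : Type*}

/-- The squared length of an edge in the framework `p`. -/
def sqLength {d : Type*} [Fintype d] (p : V → d → ℝ) : Sym2 V → ℝ :=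
  Sym2.lift ⟨fun i j => (p i - p j) ⬝ᵥ (p i - p j), fun i j => by
    simp only [← neg_sub (p j) (p i), neg_dotProduct_neg]⟩

lemma sqLength_mk {d : Type*} [Fintype d] (p : V → d → ℝ) (i j : V) :
    sqLength p s(i, j) = (p i - p j) ⬝ᵥ (p i - p j) :=
  rfl

lemma sqLength_pos {d : Type*} [Fintype d] {p : V → d → ℝ} (hp : Function.Injective p)
    {e : Sym2 V} (he : ¬ e.IsDiag) : 0 < sqLength p e := by
  induction e with
  | _ i j => exact dotProduct_self_star_pos_iff.2 (sub_ne_zero.2 (hp.ne he))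

lemma proj_sub_eq_smul_vecMulVec_perp {p : V → Fin 2 → ℝ} {i j : V} (hij : p i ≠ p j) :
    proj (p j - p i) =
      (sqLength p s(i, j))⁻¹ • vecMulVec (perp (p i - p j)) (perp (p i - p j)) := by
  rw [Sym2.eq_swap, sqLength_mk, proj_eq_smul_vecMulVec_perp (sub_ne_zero.2 hij.symm),
    ← neg_sub (p i), map_neg, neg_vecMulVec, vecMulVec_neg, neg_neg]

lemma sum_edgeFinset_eq_sum_adj {M : Type*} [AddCommMonoid M] [Fintype V] {G : SimpleGraph V}
    [DecidableRel G.Adj] [Fintype G.edgeSet] {k : V} {f : Sym2 V → M}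
    (hf : ∀ e, k ∉ e → f e = 0) :
    ∑ e ∈ G.edgeFinset, f e = ∑ j with G.Adj k j, f s(k, j) := by
  have hstar : ∑ e ∈ starEdges k {j | G.Adj k j}, f e = ∑ j with G.Adj k j, f s(k, j) :=
    sum_map _ _ _
  rw [← hstar]
  refine (sum_subset (fun e he => ?_) fun e he he' => hf e fun hk => he' ?_).symm
  · obtain ⟨j, hj, rfl⟩ := mem_map.1 he
    exact SimpleGraph.mem_edgeFinset.2 (mem_filter_univ j |>.1 hj)
  · obtain ⟨j, rfl⟩ := hk
    exact mk_mem_starEdges.2 ((mem_filter_univ j).2 (SimpleGraph.mem_edgeFinset.1 he))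

lemma bearingLaplacian_eq_sum [Fintype V] [DecidableEq V] (G : SimpleGraph V) [Fintype G.edgeSet]
    {p : V → Fin 2 → ℝ} (hp : Function.Injective p) :
    bearingLaplacian G p = ∑ e ∈ G.edgeFinset, (sqLength p e)⁻¹ •
      vecMulVec (Function.uncurry (rigidityRow (perp ∘ p) e))
        (Function.uncurry (rigidityRow (perp ∘ p) e)) := by
  classical
  have hleft (k j : V) : rigidityRow (perp ∘ p) s(k, j) k = perp (p k - p j) := by
    rw [rigidityRow_mk_apply_left, map_sub, Function.comp_apply, Function.comp_apply]
  have hright (k j : V) : rigidityRow (perp ∘ p) s(k, j) j = -perp (p k - p j) := by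
    rw [Sym2.eq_swap, hleft, ← map_neg, neg_sub]
  ext ⟨k, s⟩ ⟨l, t⟩
  simp only [Matrix.sum_apply, Matrix.smul_apply, vecMulVec_apply, Function.uncurry_apply_pair,
    smul_eq_mul, bearingLaplacian]
  rw [sum_edgeFinset_eq_sum_adj (k := k) fun e he => by
    rw [rigidityRow_apply_of_notMem _ he, Pi.zero_apply, zero_mul, mul_zero]]
  have hoff {j : V} (hkl : k ≠ l) (hj : j ≠ l) : (sqLength p s(k, j))⁻¹ *
      (rigidityRow (perp ∘ p) s(k, j) k s * rigidityRow (perp ∘ p) s(k, j) l t) = 0 := by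
    rw [rigidityRow_apply_of_notMem _ (v := l) (by simp [hkl.symm, hj.symm]), Pi.zero_apply,
      mul_zero, mul_zero]
  split_ifs with hkl hadj
  · subst hkl
    refine sum_congr (by congr) fun j hj => ?_
    have hkj : p k ≠ p j := hp.ne ((mem_filter_univ j).1 hj).ne
    rw [proj_sub_eq_smul_vecMulVec_perp hkj, hleft, Matrix.smul_apply, vecMulVec_apply,
      smul_eq_mul]
  · rw [sum_eq_single_of_mem l ((mem_filter_univ l).2 hadj) fun j _ => hoff hkl,
      proj_sub_eq_smul_vecMulVec_perp (hp.ne hkl), hleft, hright, Matrix.smul_apply,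
      vecMulVec_apply, smul_eq_mul, Pi.neg_apply, mul_neg, mul_neg]
  · exact (sum_eq_zero fun j hj => hoff hkl
      fun h => hadj (h ▸ (mem_filter_univ j).1 hj)).symm

lemma rank_bearingLaplacian [Fintype V] [DecidableEq V] (G : SimpleGraph V)
    {p : V → Fin 2 → ℝ} (hp : Function.Injective p) :
    (bearingLaplacian G p).rank =
      finrank ℝ (Submodule.span ℝ (rigidityRow p '' G.edgeSet)) := by
  classical
  set φ : (V → Fin 2 → ℝ) →ₗ[ℝ] V × Fin 2 → ℝ :=
    (LinearEquiv.curry ℝ ℝ V (Fin 2)).symm.toLinearMap ∘ₗ perp.compLeft V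
  have hφ : Function.Injective φ :=
    (LinearEquiv.curry ℝ ℝ V (Fin 2)).symm.injective.comp perp_injective.comp_left
  have hrow (e : Sym2 V) : Function.uncurry (rigidityRow (perp ∘ p) e) = φ (rigidityRow p e) :=
    congrArg Function.uncurry (rigidityRow_comp perp p e)
  rw [bearingLaplacian_eq_sum G hp, rank_sum_smul_vecMulVec fun e he =>
    inv_pos.2 (sqLength_pos hp (G.not_isDiag_of_mem_edgeFinset he)), G.coe_edgeFinset,
    (Submodule.equivMapOfInjective φ hφ _).finrank_eq, Submodule.map_span, Set.image_image]
  rw [funext hrow]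

end BearingLaplacian

section Laman

open Module

lemma exists_finset_linearIndepOn_card_eq_finrank_span {ι K M : Type*} [Finite ι] [Field K]
    [AddCommGroup M] [Module K M] {v : ι → M} {s t : Set ι} (hs : LinearIndepOn K v s)
    (hst : s ⊆ t) :
    ∃ F : Finset ι, s ⊆ F ∧ ↑F ⊆ t ∧ LinearIndepOn K v (F : Set ι) ∧
      #F = finrank K (Submodule.span K (v '' t)) := by
  classical
  have := Fintype.ofFinite ι
  obtain ⟨b, hbt, hsb, hspan, hb⟩ := exists_linearIndepOn_extension hs hst
  obtain ⟨F, rfl⟩ : ∃ F : Finset ι, ↑F = b := ⟨b.toFinset, b.coe_toFinset⟩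
  have heq : Submodule.span K (v '' t) = Submodule.span K (Set.range fun e : F => v e) :=
    le_antisymm (Submodule.span_le.2 (Set.image_eq_range v (F : Set ι) ▸ hspan))
      (Set.image_eq_range v (F : Set ι) ▸ Submodule.span_mono (Set.image_mono hbt))
  refine ⟨F, hsb, hbt, hb, ?_⟩
  rw [heq]
  simpa using (finrank_span_eq_card hb).symm

variable {V : Type*} [Fintype V] {G : SimpleGraph V} {p : V → Fin 2 → ℝ}

open scoped Classical in
lemma exists_isLamanSparse_card_eq_rank_bearingLaplacian [DecidableEq V]
    (hp : Function.Injective p) :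
    ∃ H ≤ G, IsLamanSparse H.edgeFinset ∧ #H.edgeFinset = (bearingLaplacian G p).rank := by
  obtain ⟨F, -, hFG, hF, hcard⟩ := exists_finset_linearIndepOn_card_eq_finrank_span
    (linearIndepOn_empty ℝ (rigidityRow p)) G.edgeSet.empty_subset
  obtain ⟨H, hHF⟩ : ∃ H : SimpleGraph V, H.edgeFinset = F := by
    refine ⟨SimpleGraph.fromEdgeSet F, ?_⟩
    rw [← coe_inj, SimpleGraph.coe_edgeFinset, SimpleGraph.edgeSet_fromEdgeSet, sdiff_eq_left]
    exact Set.disjoint_left.2 fun e he => G.not_isDiag_of_mem_edgeSet (hFG he)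
  refine ⟨H, ?_, ?_, ?_⟩
  · rwa [← SimpleGraph.edgeSet_subset_edgeSet, ← H.coe_edgeFinset, hHF]
  · rw [hHF]
    exact isLamanSparse_of_linearIndepOn_rigidityRow hF
  · rw [hHF, hcard, rank_bearingLaplacian G hp]

open scoped Classical in
lemma exists_card_edgeFinset_le_rank_bearingLaplacian [DecidableEq V] {H : SimpleGraph V}
    (hHG : H ≤ G) (hH : IsLamanSparse H.edgeFinset) :
    ∃ p : V → Fin 2 → ℝ, Function.Injective p ∧ #H.edgeFinset ≤ (bearingLaplacian G p).rank := by
  obtain ⟨p, hp⟩ : IsRigidityIndependent (Fin 2 → ℝ) H.edgeFinset :=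
    hH.isRigidityIndependent (by simp)
  obtain ⟨q, hq, hHq⟩ := exists_inGeneralPosition_of_linearIndepOn_rigidityRow hp
  obtain ⟨F, hHF, -, -, hcard⟩ := exists_finset_linearIndepOn_card_eq_finrank_span hHq
    (t := G.edgeSet) (H.coe_edgeFinset ▸ SimpleGraph.edgeSet_mono hHG)
  refine ⟨q, hq.injective, ?_⟩
  rw [rank_bearingLaplacian G hq.injective, ← hcard]
  exact card_le_card (coe_subset.1 hHF)

lemma rank_bearingLaplacian_add_three_le [Nontrivial V] (hp : Function.Injective p) :
    (bearingLaplacian G p).rank + 3 ≤ 2 * Fintype.card V := by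
  classical
  obtain ⟨H, -, hH, hcard⟩ := exists_isLamanSparse_card_eq_rank_bearingLaplacian (G := G) hp
  simpa [hcard] using hH.card_add_three_le_of_one_lt (X := univ) Fintype.one_lt_card

open scoped Classical in
lemma isLaman_iff_isLamanSparse {n : ℕ} (hn : 2 ≤ n) {G : SimpleGraph (Fin n)} :
    IsLaman G ↔ IsLamanSparse G.edgeFinset ∧ #G.edgeFinset + 3 = 2 * n := by
  have hfilter (S : Finset (Fin n)) :
      {e ∈ G.edgeFinset | ∀ v ∈ e, v ∈ S} = G.edgeFinset ∩ S.sym2 := by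
    ext e
    rw [mem_filter, mem_inter, mem_sym2_iff]
  rw [IsLaman, and_comm, eq_tsub_iff_add_eq_of_le (by lia)]
  refine and_congr_left fun _ => ?_
  simp only [hfilter]
  refine ⟨?_, fun h S hS => le_tsub_of_add_le_right (h.card_add_three_le_of_one_lt hS)⟩
  rintro h S ⟨e, he⟩
  obtain ⟨heG, heS⟩ := mem_inter.1 he
  have hS : 2 ≤ #S := by
    rw [← Sym2.card_toFinset_of_not_isDiag e (G.not_isDiag_of_mem_edgeFinset heG)]
    exact card_le_card fun v hv => mem_sym2_iff.1 heS v (Sym2.mem_toFinset.1 hv)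
  have := h S hS
  lia

open scoped Classical in
theorem stmt19_general [DecidableEq V] (G : SimpleGraph V) :
    ((∃ p : V → Fin 2 → ℝ, Function.Injective p ∧
        (bearingLaplacian G p).rank + 3 = 2 * Fintype.card V) ↔
      ∃ H : SimpleGraph V, H ≤ G ∧ IsLamanSparse H.edgeFinset ∧
        #H.edgeFinset + 3 = 2 * Fintype.card V) ∧
    ((∃ p : V → Fin 2 → ℝ, Function.Injective p ∧
        (bearingLaplacian G p).rank + 3 = 2 * Fintype.card V) →
      2 * Fintype.card V ≤ #G.edgeFinset + 3) := by
  refine ⟨⟨?_, ?_⟩, ?_⟩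
  · rintro ⟨p, hp, hrank⟩
    obtain ⟨H, hHG, hH, hcard⟩ := exists_isLamanSparse_card_eq_rank_bearingLaplacian hp
    exact ⟨H, hHG, hH, hcard ▸ hrank⟩
  · rintro ⟨H, hHG, hH, hcard⟩
    have : Nontrivial V := Fintype.one_lt_card_iff_nontrivial.1 (by lia)
    obtain ⟨p, hp, hle⟩ := exists_card_edgeFinset_le_rank_bearingLaplacian hHG hH
    have hge := rank_bearingLaplacian_add_three_le (G := G) hp
    exact ⟨p, hp, by lia⟩
  · rintro ⟨p, hp, hrank⟩
    obtain ⟨H, hHG, -, hcard⟩ := exists_isLamanSparse_card_eq_rank_bearingLaplacian hp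
    rw [← hrank, ← hcard]
    gcongr

end Laman

end

open scoped Classical in
theorem stmt19 {n : ℕ} (hn : 2 ≤ n) (G : SimpleGraph (Fin n)) :
    ((∃ p : Fin n → Fin 2 → ℝ, Function.Injective p ∧
        (bearingLaplacian G p).rank = 2 * n - 3) ↔
      ∃ H : SimpleGraph (Fin n), H ≤ G ∧ IsLaman H) ∧
    ((∃ p : Fin n → Fin 2 → ℝ, Function.Injective p ∧
        (bearingLaplacian G p).rank = 2 * n - 3) →
      2 * n - 3 ≤ G.edgeFinset.card) := by
  simpa only [isLaman_iff_isLamanSparse hn, eq_tsub_iff_add_eq_of_le (show 3 ≤ 2 * n by lia),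
    tsub_le_iff_right, Fintype.card_fin] using stmt19_general G
end
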